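/- arXiv:2001.02470 — 2 statements merged into one kernel-verified Lean document; each statement's English description precedes it below -/
import Mathlib

section
/- Suppose a is contained in the Jacobson radical of R and M is an a-relative generalized Cohen-Macaulay R-module such that c := cd(a,M) = ara(a,M). If x_1,...,x_c is an a-relative system of parameters of M, then x_1,...,x_c is an unconditioned a-filter regular sequence on M. -/
/-!
Formalization of a statement from "A theory of relative generalized Cohen-Macaulay modules"
by Divaani-Aazar, Ghanbari Doust, Tousi and Zakeri.

Throughout, `R` is a commutative Noetherian ring and `M` a finitely generated `R`-module.
Conventions used below:
* `locH I i M` is the local cohomology module `H^i_I(M)` (Mathlib's `localCohomology`).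
* Conditions `cd(I,M) = c`, `ara(I,M) = n`, `f_I(M) = f`, `grade(I,M) = r` are expressed by
  the predicates `IsCd`, `IsAra`, `IsFinDim`, `IsGrade`.
* Sequences are given as functions `Fin r → R`; `pSpan M x i = ⟨x_0,…,x_{i-1}⟩M`.
* Koszul (co)homology is defined via the explicit (co)chain complex on the `p`-element
  subsets of `{0,…,n-1}`, and the canonical map `λ^i` into local cohomology is the structure
  map (at exponent 1) into the direct limit of Koszul cohomologies of powers of the sequence,
  which is the realization of `H^i_{⟨x⟩}(M)` used in the paper (2.1(iv)).
-/

open CategoryTheory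

noncomputable section

variable {R : Type} [CommRing R]

/-! ### Sequences: prefix spans, weak sequences, filter regular sequences, d-sequences -/

/-- `pSpan M x i` is the submodule `⟨x_0, …, x_{i-1}⟩M` of `M`. -/
def pSpan (M : Type) [AddCommGroup M] [Module R M] {r : ℕ} (x : Fin r → R) (i : Fin r) :
    Submodule R M :=
  Ideal.span (x '' {j | j < i}) • (⊤ : Submodule R M)

/-- `x_1, …, x_r` is an `I`-weak sequence on `M`:
`(⟨x_1,…,x_{i-1}⟩M :_M x_i) ⊆ (⟨x_1,…,x_{i-1}⟩M :_M I)` for all `i`. -/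
def IsWeakSeq (I : Ideal R) (M : Type) [AddCommGroup M] [Module R M] {r : ℕ}
    (x : Fin r → R) : Prop :=
  ∀ i : Fin r, ∀ m : M, x i • m ∈ pSpan M x i → ∀ a ∈ I, a • m ∈ pSpan M x i

/-- `x_1, …, x_r` is an `I`-filter regular sequence on `M`:
`(⟨x_1,…,x_{i-1}⟩M :_M x_i) ⊆ ⋃ₜ (⟨x_1,…,x_{i-1}⟩M :_M I^t)` for all `i`. -/
def IsFilterRegSeq (I : Ideal R) (M : Type) [AddCommGroup M] [Module R M] {r : ℕ}
    (x : Fin r → R) : Prop :=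
  ∀ i : Fin r, ∀ m : M, x i • m ∈ pSpan M x i →
    ∃ t : ℕ, ∀ a ∈ I ^ t, a • m ∈ pSpan M x i

/-- An unconditioned `I`-filter regular sequence: filter regular in any order. -/
def IsUncondFilterRegSeq (I : Ideal R) (M : Type) [AddCommGroup M] [Module R M] {r : ℕ}
    (x : Fin r → R) : Prop :=
  ∀ σ : Equiv.Perm (Fin r), IsFilterRegSeq I M (x ∘ σ)

/-- An unconditioned `I`-weak sequence: all positive powers, in any order, form an
`I`-weak sequence. -/
def IsUncondWeakSeq (I : Ideal R) (M : Type) [AddCommGroup M] [Module R M] {r : ℕ}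
    (x : Fin r → R) : Prop :=
  ∀ σ : Equiv.Perm (Fin r), ∀ α : Fin r → ℕ, (∀ k, 0 < α k) →
    IsWeakSeq I M fun k => x (σ k) ^ α k

/-- `x_1, …, x_r` is a d-sequence on `M`:
`(⟨x_1,…,x_{i-1}⟩M :_M x_i x_j) = (⟨x_1,…,x_{i-1}⟩M :_M x_j)` for all `i ≤ j`. -/
def IsDSeq (M : Type) [AddCommGroup M] [Module R M] {r : ℕ} (x : Fin r → R) : Prop :=
  ∀ i j : Fin r, i ≤ j → ∀ m : M,
    ((x i * x j) • m ∈ pSpan M x i ↔ x j • m ∈ pSpan M x i)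

/-- An u.s.d-sequence on `M`: all positive powers, in any order, form a d-sequence. -/
def IsUSDSeq (M : Type) [AddCommGroup M] [Module R M] {r : ℕ} (x : Fin r → R) : Prop :=
  ∀ σ : Equiv.Perm (Fin r), ∀ α : Fin r → ℕ, (∀ k, 0 < α k) →
    IsDSeq M fun k => x (σ k) ^ α k

/-! ### Local cohomology, cohomological dimension, arithmetic rank -/

/-- The `i`-th local cohomology module `H^i_I(M)`. -/
abbrev locH (I : Ideal R) (i : ℕ) (M : Type) [AddCommGroup M] [Module R M] : ModuleCat R :=
  (localCohomology I i).obj (ModuleCat.of R M)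

/-- `cd(I, M) = c`: the cohomological dimension of `I` on `M` equals `c`, i.e.
`H^c_I(M) ≠ 0` and `H^i_I(M) = 0` for all `i > c`. -/
def IsCd (I : Ideal R) (M : Type) [AddCommGroup M] [Module R M] (c : ℕ) : Prop :=
  Nontrivial (locH I c M) ∧ ∀ i : ℕ, c < i → Subsingleton (locH I i M)

/-- `f_I(M) = f`: the `I`-finiteness dimension of `M` equals `f`, i.e. `f` is the least
integer such that `H^f_I(M)` is not finitely generated. -/
def IsFinDim (I : Ideal R) (M : Type) [AddCommGroup M] [Module R M] (f : ℕ) : Prop :=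
  (∀ i : ℕ, i < f → Module.Finite R (locH I i M)) ∧ ¬ Module.Finite R (locH I f M)

/-- `M` is `I`-relative generalized Cohen-Macaulay: `cd(I,M) ≤ 0` or `cd(I,M) = f_I(M)`. -/
def IsRelGCM (I : Ideal R) (M : Type) [AddCommGroup M] [Module R M] : Prop :=
  (∀ i : ℕ, 0 < i → Subsingleton (locH I i M)) ∨
    ∃ c : ℕ, IsCd I M c ∧ IsFinDim I M c

/-- `ara(I, M) = n`: the arithmetic rank of `I` with respect to `M` equals `n`, i.e. `n` is the
least integer such that there are `x_1, …, x_n ∈ R` with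
`Rad(⟨x_1,…,x_n⟩ + Ann M) = Rad(I + Ann M)`. -/
def IsAra (I : Ideal R) (M : Type) [AddCommGroup M] [Module R M] (n : ℕ) : Prop :=
  IsLeast {k : ℕ | ∃ x : Fin k → R,
    (Ideal.span (Set.range x) + Module.annihilator R M).radical
      = (I + Module.annihilator R M).radical} n

/-- `x_1, …, x_c` is an `I`-relative system of parameters of `M` (where `c = cd(I,M)`):
the `x_i` lie in `I` and `Rad(⟨x_1,…,x_c⟩ + Ann M) = Rad(I + Ann M)`. -/
def IsRsop (I : Ideal R) (M : Type) [AddCommGroup M] [Module R M] {c : ℕ}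
    (x : Fin c → R) : Prop :=
  (∀ j, x j ∈ I) ∧
    (Ideal.span (Set.range x) + Module.annihilator R M).radical
      = (I + Module.annihilator R M).radical

section aux

open Limits Opposite
open scoped Pointwise

/-- precomposition map on Hom complexes -/
def ymap {P Q : ChainComplex (ModuleCat.{0} R) ℕ} (φ : P ⟶ Q) (M : ModuleCat.{0} R) :
    Q.linearYonedaObj R M ⟶ P.linearYonedaObj R M :=
  (HomologicalComplex.unopFunctor _ _).map
    ((((linearYoneda R (ModuleCat.{0} R)).obj M).rightOp.mapHomologicalComplex _).map φ).op

lemma ymap_f {P Q : ChainComplex (ModuleCat.{0} R) ℕ} (φ : P ⟶ Q) (M : ModuleCat.{0} R) (i : ℕ)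
   (z : Q.X i ⟶ M) : (ymap φ M).f i z = φ.f i ≫ z := rfl

lemma yd {P : ChainComplex (ModuleCat.{0} R) ℕ} (M : ModuleCat.{0} R) (i j : ℕ)
   (z : P.X i ⟶ M) : (P.linearYonedaObj R M).d i j z = P.d j i ≫ z := rfl

lemma abs_unop {C : Type*} [Category* C] {a b u v : Cᵒᵖ} {k l : C} (A : a ≅ u) (B : b ≅ v)
    (m : u ⟶ v) (HP : u ≅ op k) (HQ : v ≅ op l) (h : l ⟶ k) (e : m ≫ HQ.hom = HP.hom ≫ h.op) :
    (A.hom ≫ m ≫ B.inv).unop = (B.unop.symm ≪≫ HQ.unop.symm).hom ≫ h ≫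
      (A.unop.symm ≪≫ HP.unop.symm).inv := by
  have : m = HP.hom ≫ h.op ≫ HQ.inv := by rw [← Category.assoc, ← e]; simp
  subst this
  simp

lemma ext_map_eq {X Y : ModuleCat.{0} R} (f : X ⟶ Y) (P : ProjectiveResolution X)
    (Q : ProjectiveResolution Y) (φ : P.complex ⟶ Q.complex)
    (w : φ ≫ Q.π = P.π ≫ (ChainComplex.single₀ _).map f) (n : ℕ) (M : ModuleCat.{0} R) :
    ((Ext R (ModuleCat.{0} R) n).map f.op).app M =
      (Q.isoExt n M).hom ≫ HomologicalComplex.homologyMap (ymap φ M) n ≫ (P.isoExt n M).inv := by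
  have h := Functor.leftDerived_map_eq ((linearYoneda R (ModuleCat.{0} R)).obj M).rightOp n f φ w
  have h2 := HomologicalComplex.homologyOp_hom_naturality (ymap φ M) n
  have h3 : ((Ext R (ModuleCat.{0} R) n).map f.op).app M = ((((linearYoneda R (ModuleCat.{0} R)).obj M).rightOp.leftDerived n).map f).unop := rfl
  rw [h3, h]
  exact abs_unop _ _ _ _ _ _ h2

/-- chosen projective resolution of `R/I^t` -/
def Pr (I : Ideal R) (t : ℕ) : ProjectiveResolution (ModuleCat.of R (R ⧸ I ^ t)) :=
  projectiveResolution _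

/-- projection `R/I^s → R/I^t` -/
def prj (I : Ideal R) {s t : ℕ} (h : t ≤ s) :
    ModuleCat.of R (R ⧸ I ^ s) ⟶ ModuleCat.of R (R ⧸ I ^ t) :=
  ModuleCat.ofHom <| Submodule.mapQ _ _ LinearMap.id (Ideal.pow_le_pow_right h)

/-- augmentation -/
def aug (I : Ideal R) (t : ℕ) : (Pr I t).complex.X 0 ⟶ ModuleCat.of R (R ⧸ I ^ t) := (Pr I t).π.f 0

/-- `I^n` kills `H^i_I(M)`, in terms of cocycles. -/
def Kill (I : Ideal R) (n i : ℕ) (M : ModuleCat.{0} R) : Prop :=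
  ∀ (t : ℕ) (z : (Pr I t).complex.X i ⟶ M), (Pr I t).complex.d (i+1) i ≫ z = 0 →
   ∀ a ∈ (I : Set R) ^ n, ∃ (s : ℕ) (h : t ≤ s) (φ : (Pr I s).complex ⟶ (Pr I t).complex),
     φ.f 0 ≫ aug I t = aug I s ≫ prj I h ∧
      ∃ (j : ℕ) (w : (Pr I s).complex.X j ⟶ M), a • (φ.f i ≫ z) = (Pr I s).complex.d i j ≫ w

lemma Kill.shift {I : Ideal R} {n m i : ℕ} {S : ShortComplex (ModuleCat.{0} R)} (hS : S.ShortExact)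
    (hB : Kill I n i S.X₂) (hA : Kill I m (i+1) S.X₁) : Kill I (n+m) i S.X₃ := by
  have := hS.mono_f
  have := hS.epi_g
  suffices H : ∀ (t : ℕ) (z : (Pr I t).complex.X i ⟶ S.X₃), (Pr I t).complex.d (i+1) i ≫ z = 0 →
     ∀ a ∈ (I : Set R) ^ n, ∀ b ∈ (I : Set R) ^ m, ∃ (s : ℕ) (h : t ≤ s) (φ : (Pr I s).complex ⟶ (Pr I t).complex),
     φ.f 0 ≫ aug I t = aug I s ≫ prj I h ∧
      ∃ (j : ℕ) (w : (Pr I s).complex.X j ⟶ S.X₃), (a * b) • (φ.f i ≫ z) = (Pr I s).complex.d i j ≫ w by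
    intro t z hz a ha
    rw [pow_add, Set.mem_mul] at ha
    obtain ⟨a, ha, b, hb, rfl⟩ := ha
    exact H t z hz a ha b hb
  intro t z hz a ha b hb
  have := (Pr I t).projective i
  let z' := Projective.factorThru z S.g
  have hz' : z' ≫ S.g = z := Projective.factorThru_comp _ _
  let u := hS.exact.lift ((Pr I t).complex.d (i+1) i ≫ z') (by rw [Category.assoc, hz', hz])
  have hu : u ≫ S.f = (Pr I t).complex.d (i+1) i ≫ z' := hS.exact.lift_f _ _
  obtain ⟨s, hs, φ, hφ, j, v, hv⟩ := hA t u (by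
    rw [← cancel_mono S.f, Category.assoc, hu]; simp) b hb
  obtain ⟨v, hv⟩ : ∃ v : (Pr I s).complex.X i ⟶ S.X₁,
      b • (φ.f (i+1) ≫ u) = (Pr I s).complex.d (i+1) i ≫ v := by
    by_cases hj : j = i
    · subst hj; exact ⟨v, hv⟩
    · refine ⟨0, ?_⟩
      rw [hv, HomologicalComplex.shape _ _ _ (by simpa using hj)]; simp
  obtain ⟨s', hs', φ', hφ', j', w, hw⟩ := hB s (b • (φ.f i ≫ z') - v ≫ S.f) (by
    have := congrArg (· ≫ S.f) hv
    simp only [Linear.smul_comp, Category.assoc, hu] at this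
    rw [Preadditive.comp_sub, Linear.comp_smul, ← Category.assoc _ v, ← HomologicalComplex.Hom.comm_assoc, this, 
      Category.assoc, sub_self]) a ha
  refine ⟨s', hs.trans hs', φ' ≫ φ, ?_, j', w ≫ S.g, ?_⟩
  · rw [HomologicalComplex.comp_f, Category.assoc, hφ, ← Category.assoc, hφ', Category.assoc]
    congr 1
    ext
    rfl
  · have := congrArg (· ≫ S.g) hw
    simp only [Linear.smul_comp, Category.assoc, Preadditive.sub_comp, S.zero, hz', Linear.comp_smul, comp_zero, sub_zero] at this
    rw [← this, HomologicalComplex.comp_f, mul_smul, Category.assoc]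

lemma mem_pow_of_mem_set_pow {I : Ideal R} {n : ℕ} {a : R} (ha : a ∈ (I : Set R) ^ n) :
    a ∈ I ^ n := by
  rw [Submodule.pow_eq_span_pow_set]
  exact Submodule.subset_span ha

lemma Kill.of_smul {I : Ideal R} {n : ℕ} (i : ℕ) {M : ModuleCat.{0} R}
    (h : ∀ a ∈ I ^ n, ∀ m : M, a • m = 0) : Kill I n i M := by
  intro t z hz a ha
  refine ⟨t, le_rfl, 𝟙 _, ?_, 0, 0, ?_⟩
  · have : prj I (le_refl t) = 𝟙 _ := by
      ext; rfl
    rw [this]; simp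
  · ext x
    simp [h a (mem_pow_of_mem_set_pow ha)]

/-- `H^0` vanishes when there is no torsion. -/
lemma Kill.zero_of_torsionFree {I : Ideal R} {M : ModuleCat.{0} R}
    (h : ∀ t : ℕ, ∀ m : M, (∀ a ∈ I ^ t, a • m = 0) → m = 0) : Kill I 0 0 M := by
  intro t z hz a ha
  have hz0 : z = 0 := by
    have := (Pr I t).exact₀
    have hg : Epi (ShortComplex.mk _ _ (Pr I t).complex_d_comp_π_f_zero).g := by
      exact (inferInstance : Epi ((Pr I t).π.f 0))
    let g : ModuleCat.of R (R ⧸ I ^ t) ⟶ M := this.desc z hz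
    have hgz : aug I t ≫ g = z := this.g_desc z hz
    have : g = 0 := by
      ext
      apply h t
      intro a ha
      rw [← map_smul]
      have : (Submodule.mkQ (I ^ t)) (a • (1 : R)) = 0 := by
        rw [Submodule.mkQ_apply, Submodule.Quotient.mk_eq_zero]
        simpa using ha
      rw [LinearMap.comp_apply, this]
      exact map_zero g.hom
    rw [← hgz, this, comp_zero]
  subst hz0
  refine ⟨t, le_rfl, 𝟙 _, ?_, 0, 0, by simp⟩
  have : prj I (le_refl t) = 𝟙 _ := by
    ext; rfl
  rw [this]; simp

lemma Kill.smul_torsion {I : Ideal R} {n : ℕ} {M : ModuleCat.{0} R} (hM : Kill I n 0 M)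
    (t : ℕ) (m : M) (hm : ∀ a ∈ I ^ t, a • m = 0) : ∀ a ∈ I ^ n, a • m = 0 := by
  suffices H : ∀ a ∈ (I : Set R) ^ n, a • m = 0 by
    have : I ^ n ≤ LinearMap.ker (LinearMap.toSpanSingleton R M m) := by
      rw [Submodule.pow_eq_span_pow_set]
      exact Submodule.span_le.mpr fun a ha => H a ha
    intro a ha
    exact this ha
  intro a ha
  let g : ModuleCat.of R (R ⧸ I ^ t) ⟶ M := ModuleCat.ofHom <|
    Submodule.liftQ (I ^ t) (LinearMap.toSpanSingleton R M m) fun a ha => hm a ha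
  obtain ⟨s, hs, φ, hφ, j, w, hw⟩ := hM t (aug I t ≫ g) (by
    have := (Pr I t).complex_d_comp_π_f_zero
    rw [← Category.assoc]
    exact (congrArg (· ≫ g) this).trans zero_comp) a ha
  rw [HomologicalComplex.shape _ _ _ (by simp), zero_comp, ← Category.assoc, hφ, Category.assoc] at hw
  have hepi : Epi (aug I s) := inferInstanceAs (Epi ((Pr I s).π.f 0))
  rw [← Linear.comp_smul] at hw
  have hw2 : a • (prj I hs ≫ g) = 0 := by
    rw [← cancel_epi (aug I s), hw, comp_zero]
  have h3 : (a • (prj I hs ≫ g)).hom (Submodule.Quotient.mk (1 : R)) = 0 := by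
    rw [hw2]; rfl
  have h4 : (prj I hs ≫ g).hom (Submodule.Quotient.mk (1 : R)) = m := by
    change (LinearMap.toSpanSingleton R M m) 1 = m
    simp
  rw [← h4]
  exact h3

/-- `e` is the class of the cocycle `z` -/
def IsCls {X : ModuleCat.{0} R} (P : ProjectiveResolution X) {i : ℕ} {M : ModuleCat.{0} R}
    (z : P.complex.X i ⟶ M) (e : ((Ext R (ModuleCat.{0} R) i).obj (op X)).obj M) : Prop :=
  ∃ ζ : (P.complex.linearYonedaObj R M).cycles i,
    (P.complex.linearYonedaObj R M).iCycles i ζ = z ∧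
    (P.isoExt i M).inv ((P.complex.linearYonedaObj R M).homologyπ i ζ) = e

section
variable {X : ModuleCat.{0} R} (P : ProjectiveResolution X) {i : ℕ} {M : ModuleCat.{0} R}

lemma IsCls.exists_class (z : P.complex.X i ⟶ M) (hz : P.complex.d (i+1) i ≫ z = 0) :
    ∃ e, IsCls P z e := by
  let K := P.complex.linearYonedaObj R M
  let k : ModuleCat.of R R ⟶ K.X i := ModuleCat.ofHom (LinearMap.toSpanSingleton R (K.X i) z)
  have hk : k ≫ K.d i (i+1) = 0 := by
    ext
    change K.d i (i+1) ((1 : R) • z) = 0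
    rw [one_smul]
    exact hz
  refine ⟨_, K.liftCycles k (i+1) (by simp) hk (1 : R), ?_, rfl⟩
  have := K.liftCycles_i k (i+1) (by simp) hk
  have h2 := congrArg (fun f => f.hom (1 : R)) this
  refine h2.trans ?_
  change (1 : R) • z = z
  exact one_smul _ _

lemma IsCls.exists_rep (e : ((Ext R (ModuleCat.{0} R) i).obj (op X)).obj M) :
    ∃ z : P.complex.X i ⟶ M, P.complex.d (i+1) i ≫ z = 0 ∧ IsCls P z e := by
  let K := P.complex.linearYonedaObj R M
  obtain ⟨ζ, hζ⟩ := (ModuleCat.epi_iff_surjective (K.homologyπ i)).mp inferInstance ((P.isoExt i M).hom e)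
  refine ⟨K.iCycles i ζ, ?_, ζ, rfl, ?_⟩
  · have := K.iCycles_d i (i+1)
    exact congrArg (fun f => f.hom ζ) this
  · change (P.isoExt i M).inv (K.homologyπ i ζ) = e
    rw [hζ]; simp

variable {P}
lemma IsCls.smul {z : P.complex.X i ⟶ M} {e} (h : IsCls P z e) (a : R) : IsCls P (a • z) (a • e) := by
  obtain ⟨ζ, h1, h2⟩ := h
  refine ⟨a • ζ, ?_, ?_⟩
  · rw [map_smul, h1]; rfl
  · rw [map_smul, map_smul, h2]

lemma IsCls.coboundary {z : P.complex.X i ⟶ M} (h : IsCls P z 0) :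
    ∃ (j : ℕ) (w : P.complex.X j ⟶ M), z = P.complex.d i j ≫ w := by
  obtain ⟨ζ, h1, h2⟩ := h
  let K := P.complex.linearYonedaObj R M
  have h3 : K.homologyπ i ζ = 0 := by
    have := congrArg (P.isoExt i M).hom h2
    simpa using this
  have hex : (ShortComplex.mk (K.toCycles ((ComplexShape.up ℕ).prev i) i) (K.homologyπ i) (by simp)).Exact :=
    ShortComplex.exact_of_g_is_cokernel _ (K.homologyIsCokernel _ i rfl)
  obtain ⟨w, hw⟩ := (ShortComplex.moduleCat_exact_iff _).mp hex ζ h3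
  refine ⟨(ComplexShape.up ℕ).prev i, w, ?_⟩
  have h4 := congrArg (fun f => f.hom w) (K.toCycles_i ((ComplexShape.up ℕ).prev i) i)
  rw [← h1, ← hw]
  exact h4

lemma IsCls.eq_zero {z : P.complex.X i ⟶ M} {e} (h : IsCls P z e) {j : ℕ} (w : P.complex.X j ⟶ M)
    (hw : z = P.complex.d i j ≫ w) : e = 0 := by
  obtain ⟨ζ, h1, rfl⟩ := h
  let K := P.complex.linearYonedaObj R M
  have h4 := congrArg (fun f => f.hom w) (K.toCycles_i j i)
  have : ζ = K.toCycles j i w := by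
    apply (ModuleCat.mono_iff_injective (K.iCycles i)).mp inferInstance
    exact h1.trans (hw.trans h4.symm)
  rw [this]
  have h5 := congrArg (fun f => f.hom w) (K.toCycles_comp_homologyπ j i)
  exact (congrArg (P.isoExt i M).inv h5).trans (map_zero (P.isoExt i M).inv.hom)

lemma IsCls.map {Y : ModuleCat.{0} R} {Q : ProjectiveResolution Y} {f : X ⟶ Y}
    {z : Q.complex.X i ⟶ M} {e} (h : IsCls Q z e) (φ : P.complex ⟶ Q.complex)
    (w : φ ≫ Q.π = P.π ≫ (ChainComplex.single₀ _).map f) :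
    IsCls P (φ.f i ≫ z) (((Ext R (ModuleCat.{0} R) i).map f.op).app M e) := by
  obtain ⟨ζ, h1, rfl⟩ := h
  refine ⟨HomologicalComplex.cyclesMap (ymap φ M) i ζ, ?_, ?_⟩
  · have := congrArg (fun f => f.hom ζ) (HomologicalComplex.cyclesMap_i (ymap φ M) i)
    refine this.trans ?_
    rw [← h1]
    rfl
  · rw [ext_map_eq f P Q φ w]
    have := congrArg (fun f => f.hom ζ) (HomologicalComplex.homologyπ_naturality (ymap φ M) i)
    simp only [ModuleCat.comp_apply, Iso.inv_hom_id_apply]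
    exact congrArg (P.isoExt i M).inv this.symm
end

lemma IsCls.smul_eq_zero {I : Ideal R} {t i : ℕ} {M : ModuleCat.{0} R}
    {z : (Pr I t).complex.X i ⟶ M} {e} (hz : (Pr I t).complex.d (i+1) i ≫ z = 0)
    (h : IsCls (Pr I t) z e) (a : R) (ha : a ∈ I ^ t) :
    a • e = 0 := by
  have hom : Homotopy (a • 𝟙 (Pr I t).complex) 0 := by
    apply ProjectiveResolution.liftHomotopyZero (P := Pr I t) (Q := Pr I t)
    apply HomologicalComplex.to_single_hom_ext
    have h2 : (aug I t) ≫ (a • 𝟙 (ModuleCat.of R (R ⧸ I ^ t))) = 0 := by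
      have : a • 𝟙 (ModuleCat.of R (R ⧸ I ^ t)) = 0 := by
        ext
        change (Submodule.mkQ (I ^ t)) (a • (1 : R)) = 0
        rw [Submodule.mkQ_apply, Submodule.Quotient.mk_eq_zero]
        simpa using ha
      rw [this, comp_zero]
    rw [Linear.comp_smul, Category.comp_id] at h2
    rw [Linear.smul_comp, Category.id_comp]
    exact h2
  have h1 := hom.comm i
  have h3 : a • z = (Pr I t).complex.d i ((ComplexShape.down ℕ).next i) ≫
      (hom.hom ((ComplexShape.down ℕ).next i) i ≫ z) := by
    have h4 := congrArg (· ≫ z) h1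
    have h5 : (a • 𝟙 (Pr I t).complex : (Pr I t).complex ⟶ (Pr I t).complex).f i ≫ z = a • z := by
      simp
    rw [← h5, h1]
    rw [HomologicalComplex.zero_f, add_zero, Preadditive.add_comp, prevD_eq _ (j' := i + 1) rfl,
      Category.assoc, hz, comp_zero, add_zero]
    simp [dNext]
  exact (h.smul a).eq_zero _ h3

lemma kill_of_finite (I : Ideal R) (i : ℕ) (M : ModuleCat.{0} R)
    (hfin : Module.Finite R ((localCohomology I i).obj M)) : ∃ n, Kill I n i M := by
  let D := localCohomology.diagram (localCohomology.idealPowersDiagram I) i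
  let c := ((evaluation _ _).obj M).mapCocone (colimit.cocone D)
  have hc : IsColimit c := isColimitOfPreserves _ (colimit.isColimit D)
  have hfin' : Module.Finite R c.pt := hfin
  have hfil : IsFiltered (ℕᵒᵖ)ᵒᵖ := inferInstance
  have tors : ∀ y : c.pt, ∃ t : ℕ, ∀ a ∈ I ^ t, a • y = 0 := by
    intro y
    obtain ⟨t, e, rfl⟩ := Concrete.isColimit_exists_rep _ hc y
    obtain ⟨z, hz, hze⟩ := IsCls.exists_rep (Pr I t.unop.unop) (i := i) (M := M) e
    refine ⟨t.unop.unop, fun a ha => ?_⟩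
    rw [← map_smul]
    exact (congrArg _ (hze.smul_eq_zero hz a ha)).trans (map_zero (c.ι.app t).hom)
  have unif : ∃ n, ∀ a ∈ I ^ n, ∀ y : c.pt, a • y = 0 := by
    obtain ⟨S, hS⟩ := hfin'.fg_top
    choose T hT using tors
    refine ⟨S.sup T, fun a ha y => ?_⟩
    have : (⊤ : Submodule R c.pt) ≤ LinearMap.ker (LinearMap.lsmul R c.pt a) := by
      rw [← hS, Submodule.span_le]
      intro y hy
      exact hT y a (Ideal.pow_le_pow_right (Finset.le_sup hy) ha)
    exact this (Submodule.mem_top (x := y))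
  obtain ⟨n, hn⟩ := unif
  refine ⟨n, fun t z hz a ha => ?_⟩
  obtain ⟨e, he⟩ := IsCls.exists_class (Pr I t) z hz
  have h0 : c.ι.app (op (op t)) (a • e) = c.ι.app (op (op t)) 0 := by
    refine Eq.trans ?_ (map_zero (c.ι.app (op (op t))).hom).symm
    exact ((c.ι.app (op (op t))).hom.map_smul a e).trans (hn a (mem_pow_of_mem_set_pow ha) _)
  obtain ⟨s, g, h⟩ := (IsColimit.eq_iff' hc _ _).mp h0
  have hts : t ≤ s.unop.unop := g.unop.unop.down.down
  let φ : (Pr I s.unop.unop).complex ⟶ (Pr I t).complex := ProjectiveResolution.lift (prj I hts) _ _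
  have hφ := ProjectiveResolution.lift_commutes (prj I hts) (Pr I s.unop.unop) (Pr I t)
  have hcl := (he.smul a).map φ hφ
  have h0 : (((Ext R (ModuleCat.{0} R) i).map (prj I hts).op).app M (a • e)) = 0 := by
    refine h.trans ?_
    exact map_zero _
  rw [h0] at hcl
  obtain ⟨j, w, hw⟩ := hcl.coboundary
  refine ⟨s.unop.unop, hts, φ, ?_, j, w, ?_⟩
  · exact ProjectiveResolution.lift_commutes_zero _ _ _
  · rw [← hw, Linear.comp_smul]

/-! ### Module-level consequences -/

lemma Kill.shift_of_exact {I : Ideal R} {n m i : ℕ} {A B C : Type} [AddCommGroup A] [AddCommGroup B]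
    [AddCommGroup C] [Module R A] [Module R B] [Module R C] (f : A →ₗ[R] B) (g : B →ₗ[R] C)
    (hf : Function.Injective f) (hg : Function.Surjective g) (hfg : Function.Exact f g)
    (hB : Kill I n i (ModuleCat.of R B)) (hA : Kill I m (i+1) (ModuleCat.of R A)) :
    Kill I (n+m) i (ModuleCat.of R C) := by
  let S : ShortComplex (ModuleCat.{0} R) := ShortComplex.mk (ModuleCat.ofHom f) (ModuleCat.ofHom g)
    (by ext x; exact hfg.apply_apply_eq_zero x)
  have hS : S.ShortExact := ModuleCat.shortComplex_shortExact S hfg hf hg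
  exact Kill.shift hS hB hA

/-- the `I`-power torsion submodule -/
def Gam (I : Ideal R) (M : Type) [AddCommGroup M] [Module R M] : Submodule R M where
  carrier := {m | ∃ t : ℕ, ∀ a ∈ I ^ t, a • m = 0}
  zero_mem' := ⟨0, fun a _ => smul_zero a⟩
  add_mem' := by
    rintro x y ⟨s, hs⟩ ⟨t, ht⟩
    refine ⟨s + t, fun a ha => ?_⟩
    rw [smul_add, hs a (Ideal.pow_le_pow_right (by omega) ha),
      ht a (Ideal.pow_le_pow_right (by omega) ha), add_zero]
  smul_mem' := by
    rintro b x ⟨s, hs⟩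
    exact ⟨s, fun a ha => by rw [smul_comm, hs a ha, smul_zero]⟩

section
variable [IsNoetherianRing R]

lemma exists_uniform {I : Ideal R} {M : Type} [AddCommGroup M] [Module R M] [Module.Finite R M]
    (N : Submodule R M) (h : N ≤ Gam I M) : ∃ n, ∀ a ∈ I ^ n, ∀ m ∈ N, a • m = 0 := by
  obtain ⟨S, hS⟩ : N.FG := IsNoetherian.noetherian N
  have tors : ∀ y : M, ∃ t : ℕ, y ∈ N → ∀ a ∈ I ^ t, a • y = 0 := by
    intro y
    by_cases hy : y ∈ N
    · obtain ⟨t, ht⟩ := h hy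
      exact ⟨t, fun _ => ht⟩
    · exact ⟨0, fun h => absurd h hy⟩
  choose T hT using tors
  refine ⟨S.sup T, fun a ha y hy => ?_⟩
  have : N ≤ LinearMap.ker (LinearMap.lsmul R M a) := by
    rw [← hS, Submodule.span_le]
    intro y hy
    exact hT y (hS ▸ Submodule.subset_span hy) a (Ideal.pow_le_pow_right (Finset.le_sup hy) ha)
  exact this hy

lemma kill_sub {I : Ideal R} {M : Type} [AddCommGroup M] [Module R M] [Module.Finite R M]
    (N : Submodule R M) (h : N ≤ Gam I M) : ∃ n, ∀ i, Kill I n i (ModuleCat.of R N) := by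
  obtain ⟨n, hn⟩ := exists_uniform N h
  refine ⟨n, fun i => Kill.of_smul i ?_⟩
  rintro a ha ⟨m, hm⟩
  exact Subtype.ext (hn a ha m hm)

lemma kill_mod_gam {I : Ideal R} {M : Type} [AddCommGroup M] [Module R M] [Module.Finite R M]
    {i n : ℕ} (h : Kill I n i (ModuleCat.of R M)) : ∃ n, Kill I n i (ModuleCat.of R (M ⧸ Gam I M)) := by
  obtain ⟨m, hm⟩ := kill_sub (Gam I M) le_rfl
  exact ⟨n + m, Kill.shift_of_exact (Gam I M).subtype (Gam I M).mkQ (Submodule.injective_subtype _)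
    (Submodule.mkQ_surjective _) (LinearMap.exact_subtype_mkQ _) h (hm _)⟩

lemma gam_quot {I : Ideal R} {M : Type} [AddCommGroup M] [Module R M] [Module.Finite R M] (t : ℕ)
    (m : M ⧸ Gam I M) (h : ∀ a ∈ I ^ t, a • m = 0) : m = 0 := by
  obtain ⟨m, rfl⟩ := Submodule.mkQ_surjective _ m
  obtain ⟨n, hn⟩ := exists_uniform (Gam I M) le_rfl
  rw [Submodule.mkQ_apply, Submodule.Quotient.mk_eq_zero]
  refine ⟨n + t, fun a ha => ?_⟩
  rw [pow_add] at ha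
  refine Submodule.mul_induction_on ha (fun b hb c hc => ?_) (fun b c hb hc => ?_)
  · rw [mul_smul]
    apply hn b hb
    have := h c hc
    rwa [← map_smul, Submodule.mkQ_apply, Submodule.Quotient.mk_eq_zero] at this
  · rw [add_smul, hb, hc, add_zero]

lemma ass_mod_gam {I p : Ideal R} {M : Type} [AddCommGroup M] [Module R M]
    (hp : p ∈ associatedPrimes R M) (hI : ¬ I ≤ p) : p ∈ associatedPrimes R (M ⧸ Gam I M) := by
  rw [AssociatedPrimes.mem_iff, isAssociatedPrime_iff] at hp ⊢
  obtain ⟨hp, x, hx⟩ := hp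
  refine ⟨hp, (Gam I M).mkQ x, ?_⟩
  ext a
  rw [Submodule.mem_colon_singleton, Submodule.mem_bot, ← map_smul, Submodule.mkQ_apply,
    Submodule.Quotient.mk_eq_zero]
  constructor
  · intro ha
    rw [hx, Submodule.mem_colon_singleton, Submodule.mem_bot] at ha
    rw [ha]; exact zero_mem _
  · rintro ⟨t, ht⟩
    obtain ⟨b, hb, hbp⟩ := Set.not_subset.mp hI
    have := ht (b ^ t) (Ideal.pow_mem_pow hb t)
    rw [← mul_smul] at this
    have h2 : b ^ t * a ∈ p := by
      rw [hx, Submodule.mem_colon_singleton, Submodule.mem_bot, this]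
    exact (hp.mem_or_mem h2).resolve_left fun h => hbp (hp.mem_of_pow_mem t h)

lemma exists_regular {I : Ideal R} {M : Type} [AddCommGroup M] [Module R M] [Module.Finite R M]
    (h : ∀ m : M, (∀ a ∈ I, a • m = 0) → m = 0) : ∃ y ∈ I, IsSMulRegular M y := by
  have : Subsingleton ((R ⧸ I) →ₗ[R] M) := by
    refine ⟨fun f g => ?_⟩
    have key : ∀ f : (R ⧸ I) →ₗ[R] M, f = 0 := by
      intro f
      apply Submodule.linearMap_qext
      ext
      apply h
      intro a ha
      rw [← map_smul, LinearMap.comp_apply]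
      have : (Submodule.mkQ I) (a • (1 : R)) = 0 := by
        rw [Submodule.mkQ_apply, Submodule.Quotient.mk_eq_zero]
        simpa using ha
      rw [this, map_zero]
    rw [key f, key g]
  obtain ⟨y, hy, hr⟩ := IsSMulRegular.subsingleton_linearMap_iff.mp this
  rw [Ideal.annihilator_quotient] at hy
  exact ⟨y, hy, hr⟩

/-- elements killed by `p` -/
def tor (p : Ideal R) (M : Type) [AddCommGroup M] [Module R M] : Submodule R M where
  carrier := {m | ∀ a ∈ p, a • m = 0}
  zero_mem' := fun a _ => smul_zero a
  add_mem' := fun hx hy a ha => by rw [smul_add, hx a ha, hy a ha, add_zero]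
  smul_mem' := fun b x hx a ha => by rw [smul_comm, hx a ha, smul_zero]

lemma ann_tor {p : Ideal R} {M : Type} [AddCommGroup M] [Module R M]
    (hp : p ∈ associatedPrimes R M) : Module.annihilator R (tor p M) = p := by
  rw [AssociatedPrimes.mem_iff, isAssociatedPrime_iff] at hp
  obtain ⟨hp, x, hx⟩ := hp
  apply le_antisymm
  · intro a ha
    rw [Module.mem_annihilator] at ha
    have hxt : x ∈ tor p M := by
      intro b hb
      rwa [hx, Submodule.mem_colon_singleton, Submodule.mem_bot] at hb
    have := congrArg Subtype.val (ha ⟨x, hxt⟩)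
    rw [hx, Submodule.mem_colon_singleton, Submodule.mem_bot]
    exact this
  · intro a ha
    rw [Module.mem_annihilator]
    rintro ⟨m, hm⟩
    exact Subtype.ext (hm a ha)

lemma ass_quot_tor {p q : Ideal R} {M : Type} [AddCommGroup M] [Module R M] [Module.Finite R M]
    (hp : p ∈ associatedPrimes R M) (y : R) (hq : q ∈ (p ⊔ Ideal.span {y}).minimalPrimes) :
    q ∈ associatedPrimes R (QuotSMulTop y (tor p M)) := by
  apply Module.associatedPrimes.minimalPrimes_annihilator_subset_associatedPrimes
  have h := Module.support_quotSMulTop (M := tor p M) y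
  rw [Module.support_eq_zeroLocus, Module.support_eq_zeroLocus, ann_tor hp,
    ← PrimeSpectrum.zeroLocus_span {y}, ← PrimeSpectrum.zeroLocus_sup,
    PrimeSpectrum.zeroLocus_eq_iff] at h
  rw [← Ideal.radical_minimalPrimes, h, Ideal.radical_minimalPrimes]
  exact hq

lemma ass_quot {p q : Ideal R} {M : Type} [AddCommGroup M] [Module R M] [Module.Finite R M]
    (hp : p ∈ associatedPrimes R M) (y : R) (hy : IsSMulRegular M y)
    (hq : q ∈ (p ⊔ Ideal.span {y}).minimalPrimes) :
    q ∈ associatedPrimes R (QuotSMulTop y M) := by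
  refine associatedPrimes.subset_of_injective (f := QuotSMulTop.map y (tor p M).subtype) ?_
    (ass_quot_tor hp y hq)
  rw [← LinearMap.ker_eq_bot, Submodule.eq_bot_iff]
  intro u hu
  obtain ⟨v, rfl⟩ := Submodule.mkQ_surjective _ u
  rw [LinearMap.mem_ker, Submodule.mkQ_apply, QuotSMulTop.map_apply_mk,
    Submodule.Quotient.mk_eq_zero, Submodule.mem_smul_pointwise_iff_exists] at hu
  obtain ⟨m, -, hm⟩ := hu
  rw [Submodule.mkQ_apply, Submodule.Quotient.mk_eq_zero, Submodule.mem_smul_pointwise_iff_exists]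
  refine ⟨⟨m, fun a ha => ?_⟩, trivial, Subtype.ext hm⟩
  apply hy
  change y • a • m = y • 0
  rw [smul_comm, hm, smul_zero]
  exact v.2 a ha

lemma exists_mul_pow_le {J q I : Ideal R} (hq : q ∈ J.minimalPrimes) (hI : I ≤ q) :
    ∃ s, s ∉ q ∧ ∃ j : ℕ, ∀ a ∈ I ^ j, a * s ∈ J := by
  classical
  have hqp : q.IsPrime := hq.1.1
  have hfin := J.finite_minimalPrimes_of_isNoetherianRing
  let F := hfin.toFinset.erase q
  have hF : ¬ (∏ P ∈ F, P) ≤ q := by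
    rw [hqp.prod_le]
    rintro ⟨P, hP, hPq⟩
    rw [Finset.mem_erase, Set.Finite.mem_toFinset] at hP
    exact hP.1 (le_antisymm hPq (hq.2 hP.2.1 hPq))
  obtain ⟨s, hs, hsq⟩ := Set.not_subset.mp hF
  have h1 : q * Ideal.span {s} ≤ J.radical := by
    rw [Ideal.mul_le]
    intro a ha b hb
    obtain ⟨b, rfl⟩ := Ideal.mem_span_singleton'.mp hb
    rw [← Ideal.sInf_minimalPrimes, Ideal.mem_sInf]
    intro P hP
    by_cases hPq : P = q
    · exact hPq ▸ Ideal.mul_mem_right _ _ ha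
    · refine P.mul_mem_left _ (P.mul_mem_left _ ?_)
      have : (∏ P ∈ F, P) ≤ P := Ideal.prod_le_inf.trans (Finset.inf_le (f := id) (by simp [F, hPq, hP]))
      exact this hs
  obtain ⟨j, hj⟩ := Ideal.exists_pow_le_of_le_radical_of_fg h1 (IsNoetherian.noetherian _)
  refine ⟨s ^ j, fun h => hsq (hqp.mem_of_pow_mem j h), j, fun a ha => hj ?_⟩
  rw [mul_pow]
  exact Ideal.mul_mem_mul (Ideal.pow_right_mono hI j ha)
    (Ideal.pow_mem_pow (Ideal.mem_span_singleton_self s) j)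

lemma contra {I p q : Ideal R} {M : Type} [AddCommGroup M] [Module R M] [Module.Finite R M] {n : ℕ}
    (h0 : Kill I 0 0 (ModuleCat.of R M)) (h1 : Kill I n 1 (ModuleCat.of R M))
    (hp : p ∈ associatedPrimes R M) {y : R} (hyI : y ∈ I) (hy : IsSMulRegular M y)
    (hq : q ∈ (p ⊔ Ideal.span {y}).minimalPrimes) (hI : I ≤ q) : False := by
  have hq' : q ∈ (p ⊔ Ideal.span {y ^ (n+1)}).minimalPrimes := by
    refine ⟨⟨hq.1.1, ?_⟩, fun q2 h2 h3 => hq.2 ⟨h2.1, ?_⟩ h3⟩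
    · refine le_trans (sup_le_sup_left ?_ _) hq.1.2
      rw [Ideal.span_singleton_le_span_singleton]
      exact dvd_pow_self _ (by omega)
    · refine sup_le (le_sup_left.trans h2.2) ?_
      rw [Ideal.span_singleton_le_iff_mem]
      refine h2.1.mem_of_pow_mem (n+1) (h2.2 (Ideal.mem_sup_right (Ideal.mem_span_singleton_self _)))
  obtain ⟨s, hsq, j, hsj⟩ := exists_mul_pow_le hq' hI
  have hk : Kill I (0+n) 0 (ModuleCat.of R (QuotSMulTop (y ^ (n+1)) M)) := by
    refine Kill.shift_of_exact (LinearMap.lsmul R M (y ^ (n+1))) (Submodule.mkQ _) (hy.pow (n+1))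
      (Submodule.mkQ_surjective _) ?_ h0 h1
    rw [LinearMap.exact_iff, Submodule.ker_mkQ]
    ext m
    simp [Submodule.mem_smul_pointwise_iff_exists]
  have key : ∀ v ∈ tor p M, ∃ m, y • m = s • v := by
    intro v hv
    have h2 := hk.smul_torsion j (Submodule.Quotient.mk (s • v)) (by
      intro a ha
      have h3 := hsj a ha
      obtain ⟨b, hb, c, hc, hbc⟩ := Submodule.mem_sup.mp h3
      obtain ⟨c, rfl⟩ := Ideal.mem_span_singleton'.mp hc
      change Submodule.Quotient.mk (a • s • v) = _
      refine (Submodule.Quotient.mk_eq_zero _).mpr ?_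
      rw [← mul_smul, ← hbc, add_smul, hv b hb, zero_add, mul_comm, mul_smul]
      exact Submodule.smul_mem_pointwise_smul _ _ _ trivial) (y ^ n)
      (Ideal.pow_mem_pow hyI _ |> fun h => by rwa [zero_add])
    change Submodule.Quotient.mk (y ^ n • s • v) = _ at h2
    have h3 := (Submodule.Quotient.mk_eq_zero _).mp h2
    obtain ⟨m, -, hm⟩ := (Submodule.mem_smul_pointwise_iff_exists _ _ _).mp h3
    refine ⟨m, hy.pow n ?_⟩
    change y ^ n • y • m = y ^ n • s • v
    rw [← hm, pow_succ, mul_smul]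
  have hass := ass_quot_tor hp y hq
  rw [AssociatedPrimes.mem_iff, isAssociatedPrime_iff] at hass
  obtain ⟨-, u, hu⟩ := hass
  apply hsq
  rw [hu, Submodule.mem_colon_singleton, Submodule.mem_bot]
  obtain ⟨v, rfl⟩ := Submodule.mkQ_surjective _ u
  rw [← map_smul, Submodule.mkQ_apply, Submodule.Quotient.mk_eq_zero,
    Submodule.mem_smul_pointwise_iff_exists]
  obtain ⟨m, hm⟩ := key v v.2
  refine ⟨⟨m, fun a ha => ?_⟩, trivial, Subtype.ext hm⟩
  apply hy
  change y • a • m = y • 0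
  rw [smul_comm, hm, smul_zero, smul_comm, v.2 a ha, smul_zero]

lemma chain_two {p q : PrimeSpectrum R} (h : p < q) (r : ℕ) (hr : r ≤ 1) :
    ∃ s : LTSeries (PrimeSpectrum R), s.head = p ∧ s.last = q ∧ r ≤ s.length ∧ 1 ≤ s.length := by
  have hm : StrictMono ![p, q] := by
    rw [Fin.strictMono_iff_lt_succ]
    intro i
    fin_cases i
    simpa using h
  let s : LTSeries (PrimeSpectrum R) := LTSeries.mk 1 ![p, q] hm
  exact ⟨s, rfl, (rfl : ![p, q] (Fin.last 1) = q), hr, le_rfl⟩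

/-- The key lemma: long chains of primes. -/
lemma exists_chain {I : Ideal R} (r : ℕ) : ∀ (M : Type) [AddCommGroup M] [Module R M]
    [Module.Finite R M], (∀ i < r, ∃ n, Kill I n i (ModuleCat.of R M)) →
    ∀ p q : PrimeSpectrum R, p.asIdeal ∈ associatedPrimes R M → ¬ I ≤ p.asIdeal →
    q.asIdeal ∈ (I ⊔ p.asIdeal).minimalPrimes →
    ∃ s : LTSeries (PrimeSpectrum R), s.head = p ∧ s.last = q ∧ r ≤ s.length ∧ 1 ≤ s.length := by
  induction r with
  | zero =>
    intro M _ _ _ _ p q hp hI hq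
    have hpq : p < q := by
      refine lt_of_le_of_ne (le_sup_right.trans hq.1.2) ?_
      rintro rfl
      exact hI (le_sup_left.trans hq.1.2)
    exact chain_two hpq _ (by omega)
  | succ r ih =>
    intro M _ _ _ hK p q hp hI hq
    have hpq : p < q := by
      refine lt_of_le_of_ne (le_sup_right.trans hq.1.2) ?_
      rintro rfl
      exact hI (le_sup_left.trans hq.1.2)
    have hK' : ∀ i < r + 1, ∃ n, Kill I n i (ModuleCat.of R (M ⧸ Gam I M)) := fun i hi => by
      obtain ⟨n, hn⟩ := hK i hi
      exact kill_mod_gam hn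
    have hp' := ass_mod_gam hp hI
    have hK0 : Kill I 0 0 (ModuleCat.of R (M ⧸ Gam I M)) := Kill.zero_of_torsionFree gam_quot
    obtain ⟨y, hyI, hy⟩ : ∃ y ∈ I, IsSMulRegular (M ⧸ Gam I M) y := exists_regular fun m hm =>
      gam_quot 1 m (by simpa using hm)
    have hyq : p.asIdeal ⊔ Ideal.span {y} ≤ q.asIdeal := sup_le hpq.le (by
      rw [Ideal.span_singleton_le_iff_mem]
      exact hq.1.2 (Ideal.mem_sup_left hyI))
    have hyp : y ∉ p.asIdeal := by
      rw [AssociatedPrimes.mem_iff, isAssociatedPrime_iff] at hp'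
      obtain ⟨-, x, hx⟩ := hp'
      intro h
      have h2 := h
      rw [hx, Submodule.mem_colon_singleton, Submodule.mem_bot] at h2
      have hx0 : x = 0 := hy (h2.trans (smul_zero y).symm)
      apply p.2.ne_top
      rw [hx, hx0, Ideal.eq_top_iff_one, Submodule.mem_colon_singleton]
      simp
    obtain ⟨q', hq', hq'q⟩ := Ideal.exists_minimalPrimes_le hyq
    by_cases hIq' : I ≤ q'
    · have hqq : q.asIdeal = q' := le_antisymm (hq.2 ⟨hq'.1.1, sup_le hIq' (le_sup_left.trans hq'.1.2)⟩ hq'q) hq'q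
      rcases r with _ | r
      · exact chain_two hpq _ (by omega)
      · obtain ⟨n, hn⟩ := hK' 1 (by omega)
        exact (contra hK0 hn hp' hyI hy hq' hIq').elim
    · have hKy : ∀ i < r, ∃ n, Kill I n i (ModuleCat.of R (QuotSMulTop y (M ⧸ Gam I M))) := by
        intro i hi
        obtain ⟨n, hn⟩ := hK' i (by omega)
        obtain ⟨m, hm⟩ := hK' (i+1) (by omega)
        refine ⟨n + m, Kill.shift_of_exact (LinearMap.lsmul R _ y) (Submodule.mkQ _) hy
          (Submodule.mkQ_surjective _) ?_ hn hm⟩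
        rw [LinearMap.exact_iff, Submodule.ker_mkQ]
        ext m
        simp [Submodule.mem_smul_pointwise_iff_exists]
      have hpq' : p < ⟨q', hq'.1.1⟩ := by
        refine lt_of_le_of_ne (le_sup_left.trans hq'.1.2) ?_
        intro h
        apply hyp
        rw [h]
        exact hq'.1.2 (Ideal.mem_sup_right (Ideal.mem_span_singleton_self y))
      obtain ⟨s, hs1, hs2, hs3, hs4⟩ := ih _ hKy ⟨q', hq'.1.1⟩ q (ass_quot hp' y hy hq') hIq'
        ⟨⟨q.2, sup_le (le_sup_left.trans hq.1.2) hq'q⟩, fun P hP hPq => hq.2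
          ⟨hP.1, sup_le (le_sup_left.trans hP.2) ((le_sup_left.trans hq'.1.2).trans (le_sup_right.trans hP.2))⟩ hPq⟩
      refine ⟨s.cons p (hs1 ▸ hpq'), by simp, by simpa using hs2, by simpa using hs3, by simp⟩
end

section
variable [IsNoetherianRing R]

lemma chain_bound {r : ℕ} (y : Fin r → R) (s : LTSeries (PrimeSpectrum R))
    (h : s.last.asIdeal ∈ (Ideal.span (Set.range y) ⊔ s.head.asIdeal).minimalPrimes) :
    s.length ≤ r := by
  classical
  let P := s.head.asIdeal
  let f := Ideal.Quotient.mk P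
  have hf : Function.Surjective f := Ideal.Quotient.mk_surjective
  have hP : ∀ i, P ≤ (s i).asIdeal := fun i => s.head_le i
  let t : LTSeries (PrimeSpectrum (R ⧸ P)) := LTSeries.mk s.length
    (fun i => ⟨(s i).asIdeal.map f, Ideal.map_isPrime_of_surjective hf (by
      rw [Ideal.mk_ker]; exact hP i)⟩) (by
    intro i j hij
    refine lt_of_le_of_ne (Ideal.map_mono (s.strictMono hij).le) ?_
    intro he
    have h1 : (s i).asIdeal.map f = (s j).asIdeal.map f := congrArg PrimeSpectrum.asIdeal he
    have h2 := congrArg (Ideal.comap f) h1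
    rw [Ideal.comap_map_quotientMk, Ideal.comap_map_quotientMk, sup_eq_right.mpr (hP i),
      sup_eq_right.mpr (hP j)] at h2
    exact (s.strictMono hij).ne (PrimeSpectrum.ext h2))
  have h1 : s.last.asIdeal.map f ∈ ((Ideal.span (Set.range y)).map f).minimalPrimes := by
    rw [Ideal.minimalPrimes_map_of_surjective hf, Ideal.mk_ker]
    exact ⟨_, h, rfl⟩
  have h2 : (Ideal.span (Set.range y)).map f =
      Ideal.span ((Finset.univ.image (fun i => f (y i)) : Finset (R ⧸ P)) : Set (R ⧸ P)) := by
    rw [Ideal.map_span, ← Set.range_comp]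
    congr 1
    simp [Function.comp_def]
  rw [h2] at h1
  have h3 := Ideal.height_le_card_of_mem_minimalPrimes_span_finset h1
  have h4 : (t.length : ℕ∞) ≤ Order.height t.last := Order.length_le_height_last
  have h5 : Order.height t.last = (s.last.asIdeal.map f).height :=
    (PrimeSpectrum.height_eq_orderHeight t.last).symm
  rw [h5] at h4
  have h6 : (s.length : ℕ∞) ≤ r := h4.trans (h3.trans (by
    exact_mod_cast Finset.card_image_le.trans (by simp)))
  exact_mod_cast h6

lemma ann_mod_le {M : Type} [AddCommGroup M] [Module R M] (N : Submodule R M) :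
    Module.annihilator R M ≤ Module.annihilator R (M ⧸ N) :=
  LinearMap.annihilator_le_of_surjective N.mkQ (Submodule.mkQ_surjective _)

/-- The first element. -/
lemma first_elt {I : Ideal R} (hjac : I ≤ (⊥ : Ideal R).jacobson) {M : Type} [AddCommGroup M]
    [Module R M] [Module.Finite R M] {r : ℕ} (x : Fin (r+1) → R) (hxI : ∀ j, x j ∈ I)
    (hrad : I ≤ (Ideal.span (Set.range x) ⊔ Module.annihilator R M).radical)
    (hK : ∀ i < r + 1, ∃ n, Kill I n i (ModuleCat.of R M)) (m : M) (hm : x 0 • m = 0) :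
    m ∈ Gam I M := by
  by_contra hne
  have hne' : (Gam I M).mkQ m ≠ 0 := by
    rwa [Submodule.mkQ_apply, Ne, Submodule.Quotient.mk_eq_zero]
  obtain ⟨P, hP, hle⟩ := exists_le_isAssociatedPrime_of_isNoetherianRing R _ hne'
  have hx0 : x 0 ∈ P := by
    apply hle
    rw [Submodule.mem_colon_singleton, Submodule.mem_bot, ← map_smul, hm, map_zero]
  have hann : Module.annihilator R M ≤ P := by
    refine (ann_mod_le (Gam I M)).trans ?_
    have := hP.annihilator_le
    rwa [Submodule.annihilator_top] at this
  have hIP : ¬ I ≤ P := by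
    intro hIP
    have hP' := hP
    rw [isAssociatedPrime_iff] at hP'
    obtain ⟨hPp, u, hu⟩ := hP'
    have hu0 : u = 0 := gam_quot 1 u (by
      intro a ha
      rw [pow_one] at ha
      have := hIP ha
      rwa [hu, Submodule.mem_colon_singleton, Submodule.mem_bot] at this)
    apply hPp.ne_top
    rw [hu, hu0, Ideal.eq_top_iff_one, Submodule.mem_colon_singleton]
    simp
  have hPp : P.IsPrime := hP.isPrime
  obtain ⟨𝔪, hmax, hPm⟩ := P.exists_le_maximal hPp.ne_top
  have hIm : I ≤ 𝔪 := by
    rw [Ideal.jacobson_bot] at hjac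
    exact hjac.trans (Ring.jacobson_le_of_isMaximal 𝔪)
  obtain ⟨q, hq, -⟩ := Ideal.exists_minimalPrimes_le (sup_le hIm hPm)
  have hqp : q.IsPrime := hq.1.1
  obtain ⟨s, hs1, hs2, hs3, -⟩ := exists_chain (r+1) (M ⧸ Gam I M) (fun i hi => by
    obtain ⟨n, hn⟩ := hK i hi
    exact kill_mod_gam hn) ⟨P, hPp⟩ ⟨q, hqp⟩ hP hIP hq
  have := chain_bound (fun j : Fin r => x j.succ) s (by
    rw [hs1, hs2]
    refine ⟨⟨hqp, sup_le (Ideal.span_le.mpr ?_) (le_sup_right.trans hq.1.2)⟩, fun Q hQ hQq =>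
      hq.2 ⟨hQ.1, sup_le ?_ (le_sup_right.trans hQ.2)⟩ hQq⟩
    · rintro _ ⟨j, rfl⟩
      exact hq.1.2 (Ideal.mem_sup_left (hxI _))
    · refine hrad.trans (hQ.1.radical_le_iff.mpr (sup_le (Ideal.span_le.mpr ?_)
        (hann.trans (le_sup_right.trans hQ.2))))
      rintro _ ⟨j, rfl⟩
      refine Fin.cases ?_ (fun j => ?_) j
      · exact hQ.2 (Ideal.mem_sup_right hx0)
      · exact hQ.2 (Ideal.mem_sup_left (Ideal.subset_span ⟨j, rfl⟩)))
  omega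

lemma pSpan_zero (M : Type) [AddCommGroup M] [Module R M] {r : ℕ} (x : Fin (r+1) → R) :
    pSpan M x 0 = ⊥ := by
  simp [pSpan]

lemma pSpan_succ (M : Type) [AddCommGroup M] [Module R M] {r : ℕ} (x : Fin (r+1) → R) (j : Fin r)
    (m : M) : m ∈ pSpan M x j.succ ↔
      (Submodule.Quotient.mk m : QuotSMulTop (x 0) M) ∈
        pSpan (QuotSMulTop (x 0) M) (fun k => x k.succ) j := by
  have h1 : x '' {k | k < j.succ} = {x 0} ∪ (fun k : Fin r => x k.succ) '' {k | k < j} := by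
    ext a
    constructor
    · rintro ⟨k, hk, rfl⟩
      induction k using Fin.cases with
      | zero => exact Or.inl rfl
      | succ k => exact Or.inr ⟨k, Fin.succ_lt_succ_iff.mp hk, rfl⟩
    · rintro (rfl | ⟨k, hk, rfl⟩)
      · exact ⟨0, Fin.succ_pos _, rfl⟩
      · exact ⟨k.succ, Fin.succ_lt_succ_iff.mpr hk, rfl⟩
  have h2 : pSpan (QuotSMulTop (x 0) M) (fun k => x k.succ) j =
      (Ideal.span ((fun k : Fin r => x k.succ) '' {k | k < j}) • (⊤ : Submodule R M)).map
        (Submodule.mkQ (x 0 • ⊤)) := by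
    rw [Submodule.map_smul'', Submodule.map_top, Submodule.range_mkQ]
    rfl
  have h3 : pSpan M x j.succ = (pSpan (QuotSMulTop (x 0) M) (fun k => x k.succ) j).comap
      (Submodule.mkQ (x 0 • ⊤)) := by
    rw [h2, Submodule.comap_map_mkQ, pSpan, h1, Ideal.span_union, Submodule.sup_smul,
      Submodule.ideal_span_singleton_smul]
  rw [h3]
  rfl

lemma kill_quot {I : Ideal R} {M : Type} [AddCommGroup M] [Module R M] [Module.Finite R M] (y : R)
    (hy : ∀ m : M, y • m = 0 → m ∈ Gam I M) {i n k : ℕ} (hn : Kill I n i (ModuleCat.of R M))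
    (hk : Kill I k (i+1) (ModuleCat.of R M)) :
    ∃ n, Kill I n i (ModuleCat.of R (QuotSMulTop y M)) := by
  let f := LinearMap.lsmul R M y
  obtain ⟨a, ha⟩ := kill_sub (I := I) (LinearMap.ker f) (fun m hm => hy m hm)
  have h1 : Kill I (k + a) (i+1) (ModuleCat.of R (LinearMap.range f)) :=
    Kill.shift_of_exact (LinearMap.ker f).subtype f.rangeRestrict (Submodule.injective_subtype _)
      f.surjective_rangeRestrict (by
        rw [LinearMap.exact_iff, LinearMap.ker_rangeRestrict, Submodule.range_subtype]) hk (ha _)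
  refine ⟨_, Kill.shift_of_exact (LinearMap.range f).subtype (Submodule.mkQ (y • ⊤))
    (Submodule.injective_subtype _) (Submodule.mkQ_surjective _) ?_ hn h1⟩
  rw [LinearMap.exact_iff, Submodule.ker_mkQ, Submodule.range_subtype]
  ext m
  simp [f, Submodule.mem_smul_pointwise_iff_exists]

lemma filterReg {I : Ideal R} (hjac : I ≤ (⊥ : Ideal R).jacobson) (r : ℕ) : ∀ (M : Type)
    [AddCommGroup M] [Module R M] [Module.Finite R M] (x : Fin r → R), (∀ j, x j ∈ I) →
    I ≤ (Ideal.span (Set.range x) ⊔ Module.annihilator R M).radical →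
    (∀ i < r, ∃ n, Kill I n i (ModuleCat.of R M)) → IsFilterRegSeq I M x := by
  induction r with
  | zero => exact fun M _ _ _ x _ _ _ i => i.elim0
  | succ r ih =>
    intro M _ _ _ x hxI hrad hK i m hm
    have h0 : ∀ m : M, x 0 • m = 0 → m ∈ Gam I M := first_elt hjac x hxI hrad hK
    induction i using Fin.cases with
    | zero =>
      rw [pSpan_zero] at hm ⊢
      exact h0 m hm
    | succ j =>
      have h1 := ih (QuotSMulTop (x 0) M) (fun k => x k.succ) (fun k => hxI _) ?_ ?_ j
        (Submodule.Quotient.mk m) ((pSpan_succ M x j _).mp hm)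
      · obtain ⟨t, ht⟩ := h1
        exact ⟨t, fun a ha => (pSpan_succ M x j _).mpr (ht a ha)⟩
      · refine hrad.trans (Ideal.radical_mono (sup_le (Ideal.span_le.mpr ?_)
          ((ann_mod_le _).trans le_sup_right)))
        rintro _ ⟨k, rfl⟩
        refine Fin.cases ?_ (fun k => ?_) k
        · refine Ideal.mem_sup_right ?_
          rw [Module.mem_annihilator]
          intro u
          obtain ⟨v, rfl⟩ := Submodule.mkQ_surjective _ u
          rw [← map_smul, Submodule.mkQ_apply, Submodule.Quotient.mk_eq_zero]
          exact Submodule.smul_mem_pointwise_smul _ _ _ trivial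
        · exact Ideal.mem_sup_left (Ideal.subset_span ⟨k, rfl⟩)
      · intro i hi
        obtain ⟨n, hn⟩ := hK i (by omega)
        obtain ⟨k, hk⟩ := hK (i+1) (by omega)
        exact kill_quot (x 0) h0 hn hk

end


end aux

/-- **Theorem 3.3(i).** Suppose `I` is contained in the Jacobson radical of `R` and `M` is an
`I`-relative generalized Cohen-Macaulay module with `c := cd(I,M) = ara(I,M)`. If
`x₁, …, x_c` is an `I`-relative system of parameters of `M`, then `x₁, …, x_c` is an
unconditioned `I`-filter regular sequence on `M`. -/
theorem theorem_3_3_i [IsNoetherianRing R] (I : Ideal R) (hjac : I ≤ (⊥ : Ideal R).jacobson)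
    (M : Type) [AddCommGroup M] [Module R M] [Module.Finite R M]
    (hgcm : IsRelGCM I M) (c : ℕ) (hc : IsCd I M c) (ha : IsAra I M c)
    (x : Fin c → R) (hx : IsRsop I M x) :
    IsUncondFilterRegSeq I M x := by
  intro σ
  apply filterReg hjac c M (x ∘ σ) (fun j => hx.1 _)
  · rw [σ.surjective.range_comp]
    exact (le_sup_left.trans Ideal.le_radical).trans hx.2.ge
  · intro i hi
    apply kill_of_finite
    rcases hgcm with h | ⟨c', hc', hf⟩
    · exact (not_subsingleton_iff_nontrivial.mpr hc.1 (h c (by omega))).elim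
    · have hcc : c' = c := by
        rcases lt_trichotomy c' c with h | h | h
        · exact (not_subsingleton_iff_nontrivial.mpr hc.1 (hc'.2 c h)).elim
        · exact h
        · exact (not_subsingleton_iff_nontrivial.mpr hc'.1 (hc.2 c' h)).elim
      subst hcc
      exact hf.1 i hi
end
end

section
/- Suppose a is contained in the Jacobson radical of R and M is an a-relative generalized Cohen-Macaulay R-module such that c := cd(a,M) = ara(a,M). If x_1,...,x_c is an a-relative system of parameters of M, then for every i = 0,...,c the quotient M/⟨x_1,...,x_i⟩M is an a-relative generalized Cohen-Macaulay R-module and cd(a, M/⟨x_1,...,x_i⟩M) = c - i. -/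
/-!
Formalization of a statement from "A theory of relative generalized Cohen-Macaulay modules"
by Divaani-Aazar, Ghanbari Doust, Tousi and Zakeri.

Throughout, `R` is a commutative Noetherian ring and `M` a finitely generated `R`-module.
Conventions used below:
* `locH I i M` is the local cohomology module `H^i_I(M)` (Mathlib's `localCohomology`).
* Conditions `cd(I,M) = c`, `ara(I,M) = n`, `f_I(M) = f`, `grade(I,M) = r` are expressed by
  the predicates `IsCd`, `IsAra`, `IsFinDim`, `IsGrade`.
* Sequences are given as functions `Fin r → R`; `pSpan M x i = ⟨x_0,…,x_{i-1}⟩M`.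
* Koszul (co)homology is defined via the explicit (co)chain complex on the `p`-element
  subsets of `{0,…,n-1}`, and the canonical map `λ^i` into local cohomology is the structure
  map (at exponent 1) into the direct limit of Koszul cohomologies of powers of the sequence,
  which is the realization of `H^i_{⟨x⟩}(M)` used in the paper (2.1(iv)).
-/

open CategoryTheory

noncomputable section

variable {R : Type} [CommRing R]

namespace LC
open Opposite

/-- hom complex in the opposite category -/
abbrev Kc (P : ChainComplex (ModuleCat.{0} R) ℕ) (M : ModuleCat.{0} R) :
    ChainComplex (ModuleCat.{0} R)ᵒᵖ ℕ :=
  (((linearYoneda R (ModuleCat.{0} R)).obj M).rightOp.mapHomologicalComplex _).obj P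

/-- cocycles -/
def cocyc (P : ChainComplex (ModuleCat.{0} R) ℕ) (n : ℕ) (M : ModuleCat.{0} R) :
    Submodule R (P.X n ⟶ M) :=
  LinearMap.ker (Linear.leftComp R M (P.d (n+1) n))

lemma mem_cocyc {P : ChainComplex (ModuleCat.{0} R) ℕ} {n : ℕ} {M : ModuleCat.{0} R}
    (f : P.X n ⟶ M) : f ∈ cocyc P n M ↔ P.d (n+1) n ≫ f = 0 := Iff.rfl

/-- inclusion of the opcycles -/
def opc (P : ChainComplex (ModuleCat.{0} R) ℕ) (n : ℕ) (M : ModuleCat.{0} R) :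
    ((Kc P M).opcycles n).unop →ₗ[R] (P.X n ⟶ M) :=
  ((Kc P M).pOpcycles n).unop.hom

lemma opc_inj (P : ChainComplex (ModuleCat.{0} R) ℕ) (n : ℕ) (M : ModuleCat.{0} R) :
    Function.Injective (opc P n M) :=
  (ModuleCat.mono_iff_injective ((Kc P M).pOpcycles n).unop).1 inferInstance

lemma opc_mem (P : ChainComplex (ModuleCat.{0} R) ℕ) (n : ℕ) (M : ModuleCat.{0} R)
    (z : ((Kc P M).opcycles n).unop) : opc P n M z ∈ cocyc P n M := by
  have h : (Kc P M).d (n+1) n ≫ (Kc P M).pOpcycles n = 0 := (Kc P M).d_pOpcycles _ _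
  have h2 := congrArg (fun k => k.unop.hom z) h
  exact h2

lemma opc_surj (P : ChainComplex (ModuleCat.{0} R) ℕ) (n : ℕ) (M : ModuleCat.{0} R)
    (f : P.X n ⟶ M) (hf : f ∈ cocyc P n M) : ∃ z, opc P n M z = f := by
  let k : ModuleCat.of R R ⟶ ((Kc P M).X n).unop := 
     ModuleCat.ofHom (LinearMap.toSpanSingleton R (P.X n ⟶ M) f)
  have hk : (Kc P M).d (n+1) n ≫ k.op = 0 := by
    apply Quiver.Hom.unop_inj
    apply ModuleCat.hom_ext
    apply LinearMap.ext_ring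
    change P.d (n+1) n ≫ ((1 : R) • f) = 0
    rw [one_smul]; exact hf
  let z := ((Kc P M).descOpcycles k.op (n+1) (by simp) hk).unop.hom (1 : R)
  refine ⟨z, ?_⟩
  have := (Kc P M).p_descOpcycles k.op (n+1) (by simp) hk
  have h2 := congrArg (fun k => k.unop.hom (1:R)) this
  refine Eq.trans h2 ?_
  change (1 : R) • f = f
  simp

/-- cocycles are the opcycles -/
def cocycEquiv (P : ChainComplex (ModuleCat.{0} R) ℕ) (n : ℕ) (M : ModuleCat.{0} R) :
    ((Kc P M).opcycles n).unop ≃ₗ[R] cocyc P n M :=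
  LinearEquiv.ofBijective ((opc P n M).codRestrict _ (opc_mem P n M))
    ⟨fun a b h => opc_inj P n M (congrArg Subtype.val h), fun f => by
      obtain ⟨z, hz⟩ := opc_surj P n M f.1 f.2
      exact ⟨z, Subtype.ext hz⟩⟩

/-- class of a cocycle in the homology of the hom complex -/
def clsK (P : ChainComplex (ModuleCat.{0} R) ℕ) (n : ℕ) (M : ModuleCat.{0} R) :
    cocyc P n M →ₗ[R] ((Kc P M).homology n).unop :=
  ((Kc P M).homologyι n).unop.hom ∘ₗ (cocycEquiv P n M).symm.toLinearMap

lemma clsK_surj (P : ChainComplex (ModuleCat.{0} R) ℕ) (n : ℕ) (M : ModuleCat.{0} R) :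
    Function.Surjective (clsK P n M) := by
  have h1 : Function.Surjective ((Kc P M).homologyι n).unop.hom :=
    (ModuleCat.epi_iff_surjective ((Kc P M).homologyι n).unop).1 inferInstance
  exact h1.comp (cocycEquiv P n M).symm.surjective

lemma opc_symm (P : ChainComplex (ModuleCat.{0} R) ℕ) (n : ℕ) (M : ModuleCat.{0} R)
    (f : cocyc P n M) : opc P n M ((cocycEquiv P n M).symm f) = f.1 := by
  have := (cocycEquiv P n M).apply_symm_apply f
  exact congrArg Subtype.val this

lemma homι_exact (P : ChainComplex (ModuleCat.{0} R) ℕ) (n j : ℕ) (M : ModuleCat.{0} R)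
    (hj : (ComplexShape.down ℕ).next n = j) (z : ((Kc P M).opcycles n).unop) :
    ((Kc P M).homologyι n).unop.hom z = 0 ↔
      ∃ w, ((Kc P M).fromOpcycles n j).unop.hom w = z := by
  have h : (ShortComplex.mk ((Kc P M).homologyι n) ((Kc P M).fromOpcycles n j)
    (by simp)).Exact :=
    ShortComplex.exact_of_f_is_kernel _ ((Kc P M).homologyIsKernel n j hj)
  have h2 := h.unop
  rw [ShortComplex.moduleCat_exact_iff] at h2
  constructor
  · intro hz
    exact h2 z hz
  · rintro ⟨w, rfl⟩
    have : (Kc P M).homologyι n ≫ (Kc P M).fromOpcycles n j = 0 := by simp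
    exact congrArg (fun k => k.unop.hom w) this

lemma clsK_zero_iff_succ (P : ChainComplex (ModuleCat.{0} R) ℕ) (n : ℕ) (M : ModuleCat.{0} R)
    (f : cocyc P (n+1) M) : clsK P (n+1) M f = 0 ↔ ∃ g : P.X n ⟶ M, P.d (n+1) n ≫ g = f.1 := by
  refine Iff.trans (homι_exact P (n+1) n M (by simp) ((cocycEquiv P (n+1) M).symm f)) ?_
  have h : (Kc P M).pOpcycles (n+1) ≫ (Kc P M).fromOpcycles (n+1) n = (Kc P M).d (n+1) n :=
    (Kc P M).p_fromOpcycles _ _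
  have h' : ∀ g : P.X n ⟶ M, opc P (n+1) M (((Kc P M).fromOpcycles (n+1) n).unop.hom g)
      = P.d (n+1) n ≫ g := fun g => congrArg (fun k => k.unop.hom g) h
  constructor
  · rintro ⟨g, hg⟩
    refine ⟨g, ?_⟩
    rw [← h' g, hg, opc_symm]
  · rintro ⟨g, hg⟩
    refine ⟨g, ?_⟩
    apply opc_inj
    rw [opc_symm, ← hg]
    exact h' g

lemma clsK_zero_iff_zero (P : ChainComplex (ModuleCat.{0} R) ℕ) (M : ModuleCat.{0} R)
    (f : cocyc P 0 M) : clsK P 0 M f = 0 ↔ f = 0 := by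
  refine Iff.trans (homι_exact P 0 _ M rfl ((cocycEquiv P 0 M).symm f)) ?_
  have h : (Kc P M).fromOpcycles 0 ((ComplexShape.down ℕ).next 0) = 0 :=
    (Kc P M).fromOpcycles_eq_zero (by simp)
  rw [h]
  constructor
  · rintro ⟨w, hw⟩
    have : (cocycEquiv P 0 M).symm f = 0 := hw.symm
    simpa using this
  · rintro rfl
    exact ⟨0, by simp⟩

/-- precomposition on cocycles -/
def preC {P Q : ChainComplex (ModuleCat.{0} R) ℕ} (φ : P ⟶ Q) (n : ℕ) (M : ModuleCat.{0} R)
    (f : cocyc Q n M) : cocyc P n M :=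
  ⟨φ.f n ≫ f.1, by
    rw [mem_cocyc, ← Category.assoc, ← φ.comm, Category.assoc, (mem_cocyc _).1 f.2,
      Limits.comp_zero]⟩

/-- postcomposition on cocycles -/
def postC (P : ChainComplex (ModuleCat.{0} R) ℕ) (n : ℕ) {M N : ModuleCat.{0} R} (u : M ⟶ N)
    (f : cocyc P n M) : cocyc P n N :=
  ⟨f.1 ≫ u, by
    rw [mem_cocyc, ← Category.assoc, (mem_cocyc _).1 f.2, Limits.zero_comp]⟩

lemma clsK_pre {P Q : ChainComplex (ModuleCat.{0} R) ℕ} (φ : P ⟶ Q) (n : ℕ) (M : ModuleCat.{0} R)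
    (f : cocyc Q n M) :
    (HomologicalComplex.homologyMap
      ((((linearYoneda R (ModuleCat.{0} R)).obj M).rightOp.mapHomologicalComplex _).map φ)
        n).unop.hom (clsK Q n M f) = clsK P n M (preC φ n M f) := by
  let ψ := (((linearYoneda R (ModuleCat.{0} R)).obj M).rightOp.mapHomologicalComplex _).map φ
  have h1 := HomologicalComplex.homologyι_naturality ψ n
  have h2 := congrArg (fun k => k.unop.hom ((cocycEquiv Q n M).symm f)) h1
  refine Eq.trans h2 ?_
  change ((Kc P M).homologyι n).unop.hom ((HomologicalComplex.opcyclesMap ψ n).unop.hom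
    ((cocycEquiv Q n M).symm f)) = ((Kc P M).homologyι n).unop.hom _
  congr 1
  apply opc_inj
  have h3 := HomologicalComplex.p_opcyclesMap ψ n
  have h4 := congrArg (fun k => k.unop.hom ((cocycEquiv Q n M).symm f)) h3
  refine Eq.trans h4 ?_
  erw [opc_symm]
  change φ.f n ≫ opc Q n M ((cocycEquiv Q n M).symm f) = _
  rw [opc_symm]
  rfl

lemma clsK_post (P : ChainComplex (ModuleCat.{0} R) ℕ) (n : ℕ) {M N : ModuleCat.{0} R} (u : M ⟶ N)
    (f : cocyc P n M) :
    (HomologicalComplex.homologyMap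
      ((NatTrans.mapHomologicalComplex (NatTrans.rightOp ((linearYoneda R (ModuleCat.{0} R)).map u))
        (ComplexShape.down ℕ)).app P) n).unop.hom (clsK P n M f) = clsK P n N (postC P n u f) := by
  let ψ : Kc P N ⟶ Kc P M := 
    (NatTrans.mapHomologicalComplex (NatTrans.rightOp ((linearYoneda R (ModuleCat.{0} R)).map u))
        (ComplexShape.down ℕ)).app P
  have h1 := HomologicalComplex.homologyι_naturality ψ n
  have h2 := congrArg (fun k => k.unop.hom ((cocycEquiv P n M).symm f)) h1
  refine Eq.trans h2 ?_
  change ((Kc P N).homologyι n).unop.hom ((HomologicalComplex.opcyclesMap ψ n).unop.hom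
    ((cocycEquiv P n M).symm f)) = ((Kc P N).homologyι n).unop.hom _
  congr 1
  apply opc_inj
  have h3 := HomologicalComplex.p_opcyclesMap ψ n
  have h4 := congrArg (fun k => k.unop.hom ((cocycEquiv P n M).symm f)) h3
  refine Eq.trans h4 ?_
  erw [opc_symm]
  change opc P n M ((cocycEquiv P n M).symm f) ≫ u = _
  rw [opc_symm]
  rfl

end LC

namespace LC
open Opposite

abbrev Dg (I : Ideal R) (n : ℕ) : (ℕᵒᵖ)ᵒᵖ ⥤ ModuleCat.{0} R ⥤ ModuleCat.{0} R :=
  localCohomology.diagram (localCohomology.idealPowersDiagram I) n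

abbrev Xt (I : Ideal R) (t : ℕ) : ModuleCat.{0} R :=
  (localCohomology.ringModIdeals (localCohomology.idealPowersDiagram I)).obj (op t)

def tr (I : Ideal R) {t t' : ℕ} (h : t ≤ t') : Xt I t' ⟶ Xt I t :=
  (localCohomology.ringModIdeals (localCohomology.idealPowersDiagram I)).map (homOfLE h).op

def Pt (I : Ideal R) (t : ℕ) : ProjectiveResolution (Xt I t) := projectiveResolution _

/-- transition lifts -/
def ph (I : Ideal R) {t t' : ℕ} (h : t ≤ t') : (Pt I t').complex ⟶ (Pt I t).complex :=
  ProjectiveResolution.lift (tr I h) _ _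

abbrev FM (M : ModuleCat.{0} R) : ModuleCat.{0} R ⥤ (ModuleCat.{0} R)ᵒᵖ :=
  ((linearYoneda R (ModuleCat.{0} R)).obj M).rightOp

def isoLD (I : Ideal R) (t n : ℕ) (M : ModuleCat.{0} R) :
    ((Kc (Pt I t).complex M).homology n).unop →ₗ[R] ((Dg I n).obj (op (op t))).obj M :=
  ((Pt I t).isoLeftDerivedObj (FM M) n).hom.unop.hom

lemma isoLD_inj (I : Ideal R) (t n : ℕ) (M : ModuleCat.{0} R) :
    Function.Bijective (isoLD I t n M) :=
  (ConcreteCategory.isIso_iff_bijective ((Pt I t).isoLeftDerivedObj (FM M) n).hom.unop).1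
    inferInstance

def clsE (I : Ideal R) (t n : ℕ) (M : ModuleCat.{0} R) :
    cocyc (Pt I t).complex n M →ₗ[R] ((Dg I n).obj (op (op t))).obj M :=
  isoLD I t n M ∘ₗ clsK (Pt I t).complex n M

lemma clsE_surj (I : Ideal R) (t n : ℕ) (M : ModuleCat.{0} R) :
    Function.Surjective (clsE I t n M) :=
  (isoLD_inj I t n M).2.comp (clsK_surj _ _ _)

lemma clsE_zero_iff (I : Ideal R) (t n : ℕ) (M : ModuleCat.{0} R) (f) :
    clsE I t n M f = 0 ↔ clsK (Pt I t).complex n M f = 0 := by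
  have := (isoLD_inj I t n M).1
  constructor
  · intro h; apply this; rw [map_zero]; exact h
  · intro h; change _ = _ ; rw [clsE, LinearMap.comp_apply, h, map_zero]

lemma clsE_trans (I : Ideal R) {t t' : ℕ} (h : t ≤ t') (n : ℕ) (M : ModuleCat.{0} R)
    (f : cocyc (Pt I t).complex n M) :
    (((Dg I n).map (homOfLE h).op.op).app M).hom (clsE I t n M f) =
      clsE I t' n M (preC (ph I h) n M f) := by
  have h1 := ProjectiveResolution.isoLeftDerivedObj_hom_naturality (tr I h) (Pt I t') (Pt I t)
    (ph I h) (ProjectiveResolution.lift_commutes_zero _ _ _) (FM M) n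
  have h2 := congrArg (fun k => k.unop.hom (clsK (Pt I t).complex n M f)) h1
  refine Eq.trans h2 ?_
  have h3 := clsK_pre (ph I h) n M f
  exact congrArg (isoLD I t' n M) h3

lemma clsE_post (I : Ideal R) (t : ℕ) (n : ℕ) {M N : ModuleCat.{0} R} (u : M ⟶ N)
    (f : cocyc (Pt I t).complex n M) :
    (((Dg I n).obj (op (op t))).map u).hom (clsE I t n M f) =
      clsE I t n N (postC _ n u f) := by
  have h0 := ProjectiveResolution.leftDerived_app_eq
    (NatTrans.rightOp ((linearYoneda R (ModuleCat.{0} R)).map u)) (Pt I t) n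
  rw [← Category.assoc, Iso.eq_comp_inv] at h0
  have h2 := congrArg (fun k => k.unop.hom (clsK (Pt I t).complex n M f)) h0
  refine Eq.trans h2 ?_
  have h3 := clsK_post (Pt I t).complex n u f
  exact congrArg (isoLD I t n N) h3

def coc (I : Ideal R) (n : ℕ) (M : ModuleCat.{0} R) : 
    Limits.Cocone ((Dg I n) ⋙ (evaluation _ _).obj M) :=
  ((evaluation _ _).obj M).mapCocone (Limits.colimit.cocone (Dg I n))

def cocIs (I : Ideal R) (n : ℕ) (M : ModuleCat.{0} R) : Limits.IsColimit (coc I n M) :=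
  Limits.isColimitOfPreserves ((evaluation _ _).obj M) (Limits.colimit.isColimit (Dg I n))

/-- structure map -/
def iL (I : Ideal R) (t n : ℕ) (M : ModuleCat.{0} R) :
    ((Dg I n).obj (op (op t))).obj M →ₗ[R] (localCohomology I n).obj M :=
  ((coc I n M).ι.app (op (op t))).hom

/-- class of a cocycle -/
def cls (I : Ideal R) (t n : ℕ) (M : ModuleCat.{0} R) :
    cocyc (Pt I t).complex n M →ₗ[R] (localCohomology I n).obj M :=
  iL I t n M ∘ₗ clsE I t n M

lemma cls_surj (I : Ideal R) (n : ℕ) (M : ModuleCat.{0} R) (z : (localCohomology I n).obj M) :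
    ∃ t f, cls I t n M f = z := by
  obtain ⟨t, y, hy⟩ := Limits.Concrete.isColimit_exists_rep _ (cocIs I n M) z
  obtain ⟨f, hf⟩ := clsE_surj I t.unop.unop n M y
  refine ⟨t.unop.unop, f, ?_⟩
  rw [cls, LinearMap.comp_apply, hf]
  exact hy

lemma cls_trans (I : Ideal R) {t t' : ℕ} (h : t ≤ t') (n : ℕ) (M : ModuleCat.{0} R)
    (f : cocyc (Pt I t).complex n M) :
    cls I t' n M (preC (ph I h) n M f) = cls I t n M f := by
  rw [cls, LinearMap.comp_apply, ← clsE_trans I h]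
  have := (coc I n M).w (homOfLE h).op.op
  exact congrArg (fun k => k.hom (clsE I t n M f)) this

lemma cls_post (I : Ideal R) (t : ℕ) (n : ℕ) {M N : ModuleCat.{0} R} (u : M ⟶ N)
    (f : cocyc (Pt I t).complex n M) :
    ((localCohomology I n).map u).hom (cls I t n M f) = cls I t n N (postC _ n u f) := by
  rw [cls, cls, LinearMap.comp_apply, LinearMap.comp_apply, ← clsE_post I t]
  have := ((Limits.colimit.ι (Dg I n) (op (op t)))).naturality u
  exact (congrArg (fun k => k.hom (clsE I t n M f)) this).symm

lemma cls_zero_iff (I : Ideal R) (t n : ℕ) (M : ModuleCat.{0} R)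
    (f : cocyc (Pt I t).complex n M) :
    cls I t n M f = 0 ↔ ∃ (t' : ℕ) (h : t ≤ t'),
      clsK (Pt I t').complex n M (preC (ph I h) n M f) = 0 := by
  constructor
  · intro h0
    have h1 : (coc I n M).ι.app (op (op t)) (clsE I t n M f) =
      (coc I n M).ι.app (op (op t)) 0 := by
      rw [map_zero]; exact h0
    obtain ⟨k, g1, g2, hk⟩ := (Limits.Concrete.isColimit_rep_eq_iff_exists _ (cocIs I n M) _ _).1 h1
    have hle : t ≤ k.unop.unop := leOfHom g1.unop.unop
    refine ⟨k.unop.unop, hle, ?_⟩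
    rw [← clsE_zero_iff, ← clsE_trans I hle]
    rw [map_zero] at hk
    exact hk
  · rintro ⟨t', h, h0⟩
    rw [← cls_trans I h, cls, LinearMap.comp_apply, (clsE_zero_iff _ _ _ _ _).2 h0, map_zero]

end LC

namespace LC
open Opposite

abbrev HH (I : Ideal R) (n : ℕ) (M : Type) [AddCommGroup M] [Module R M] : ModuleCat.{0} R :=
  (localCohomology I n).obj (ModuleCat.of R M)

section
variable {A B C : Type} [AddCommGroup A] [Module R A] [AddCommGroup B] [Module R B]
  [AddCommGroup C] [Module R C]

/-- functoriality -/
def Hm (I : Ideal R) (n : ℕ) (u : A →ₗ[R] B) : HH I n A →ₗ[R] HH I n B :=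
  ((localCohomology I n).map (ModuleCat.ofHom u)).hom

lemma Hm_id (I : Ideal R) (n : ℕ) (z : HH I n A) : Hm I n (LinearMap.id : A →ₗ[R] A) z = z := by
  have : (localCohomology I n).map (ModuleCat.ofHom (LinearMap.id : A →ₗ[R] A)) = 𝟙 _ :=
    (localCohomology I n).map_id _
  exact congrArg (fun k => k.hom z) this

lemma Hm_comp (I : Ideal R) (n : ℕ) (u : A →ₗ[R] B) (v : B →ₗ[R] C) (z : HH I n A) :
    Hm I n (v ∘ₗ u) z = Hm I n v (Hm I n u z) := by
  have : (localCohomology I n).map (ModuleCat.ofHom (v ∘ₗ u)) = _ :=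
    (localCohomology I n).map_comp (ModuleCat.ofHom u) (ModuleCat.ofHom v)
  exact congrArg (fun k => k.hom z) this

def Hequiv (I : Ideal R) (n : ℕ) (e : A ≃ₗ[R] B) : HH I n A ≃ₗ[R] HH I n B :=
  LinearEquiv.ofLinearMap (Hm I n e.toLinearMap) (Hm I n e.symm.toLinearMap)
    (by ext z; simp only [LinearMap.comp_apply]; rw [← Hm_comp]; simp [Hm_id])
    (by ext z; simp only [LinearMap.comp_apply]; rw [← Hm_comp]; simp [Hm_id])

abbrev oA (A : Type) [AddCommGroup A] [Module R A] : ModuleCat.{0} R := ModuleCat.of R A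

lemma Hm_cls (I : Ideal R) (t n : ℕ) (u : A →ₗ[R] B) (f : cocyc (Pt I t).complex n (oA A)) :
    Hm I n u (cls I t n (oA A) f) = cls I t n (oA B) (postC _ n (ModuleCat.ofHom u) f) :=
  cls_post I t n _ f

lemma Hm_smul (I : Ideal R) (n : ℕ) (a : R) (z : HH I n A) :
    Hm I n (a • LinearMap.id : A →ₗ[R] A) z = a • z := by
  obtain ⟨t, f, rfl⟩ := cls_surj I n _ z
  rw [Hm_cls, ← map_smul]
  congr 1

/-- after transition a cocycle with zero class has zero K-class -/
lemma exists_coboundary (I : Ideal R) (t n : ℕ) (M : ModuleCat.{0} R)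
    (f : cocyc (Pt I t).complex (n+1) M) (h : cls I t (n+1) M f = 0) :
    ∃ (t' : ℕ) (h : t ≤ t') (g : (Pt I t').complex.X n ⟶ M),
      (Pt I t').complex.d (n+1) n ≫ g = (ph I h).f (n+1) ≫ f.1 := by
  obtain ⟨t', h', h0⟩ := (cls_zero_iff ..).1 h
  obtain ⟨g, hg⟩ := (clsK_zero_iff_succ ..).1 h0
  exact ⟨t', h', g, hg⟩

lemma exists_zero (I : Ideal R) (t : ℕ) (M : ModuleCat.{0} R)
    (f : cocyc (Pt I t).complex 0 M) (h : cls I t 0 M f = 0) :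
    ∃ (t' : ℕ) (h : t ≤ t'), (ph I h).f 0 ≫ f.1 = 0 := by
  obtain ⟨t', h', h0⟩ := (cls_zero_iff ..).1 h
  exact ⟨t', h', congrArg Subtype.val ((clsK_zero_iff_zero ..).1 h0)⟩

lemma ph_refl_cls (I : Ideal R) (t n : ℕ) (M : ModuleCat.{0} R)
    (g : (Pt I t).complex.X n ⟶ M) (f : cocyc (Pt I t).complex (n+1) M)
    (hg : (Pt I t).complex.d (n+1) n ≫ g = f.1) : cls I t (n+1) M f = 0 := by
  rw [cls, LinearMap.comp_apply, (clsE_zero_iff ..).2 ((clsK_zero_iff_succ ..).2 ⟨g, hg⟩), map_zero]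

lemma proj_lift (I : Ideal R) (t n : ℕ) (v : B →ₗ[R] C) (hv : Function.Surjective v)
    (g : (Pt I t).complex.X n ⟶ oA C) : ∃ g' : (Pt I t).complex.X n ⟶ oA B,
      g' ≫ ModuleCat.ofHom v = g := by
  have := (Pt I t).projective n
  have : Epi (ModuleCat.ofHom v) := (ModuleCat.epi_iff_surjective _).2 hv
  exact ⟨Projective.factorThru g (ModuleCat.ofHom v), Projective.factorThru_comp _ _⟩

lemma ker_lift (u : A →ₗ[R] B) (v : B →ₗ[R] C) (hu : Function.Injective u)
    (huv : Function.Exact u v) {P : ModuleCat.{0} R} (f : P ⟶ oA B)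
    (hf : f ≫ ModuleCat.ofHom v = 0) : ∃ g : P ⟶ oA A, g ≫ ModuleCat.ofHom u = f := by
  have h : ∀ p, f.hom p ∈ LinearMap.range u := fun p => by
    have := congrArg (fun k => k.hom p) hf
    exact (huv (f.hom p)).1 this
  let e := LinearEquiv.ofInjective u hu
  refine ⟨ModuleCat.ofHom (e.symm.toLinearMap ∘ₗ f.hom.codRestrict _ h), ?_⟩
  apply ModuleCat.hom_ext
  ext p
  have := LinearEquiv.apply_symm_apply e ⟨f.hom p, h p⟩
  exact congrArg Subtype.val this

lemma mono_cancel (u : A →ₗ[R] B) (hu : Function.Injective u) {P : ModuleCat.{0} R}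
    {f g : P ⟶ oA A} (h : f ≫ ModuleCat.ofHom u = g ≫ ModuleCat.ofHom u) : f = g := by
  have : Mono (ModuleCat.ofHom u) := (ModuleCat.mono_iff_injective _).2 hu
  exact (cancel_mono _).1 h

lemma comp_uv (u : A →ₗ[R] B) (v : B →ₗ[R] C) (huv : Function.Exact u v) :
    ModuleCat.ofHom u ≫ ModuleCat.ofHom v = 0 := by
  apply ModuleCat.hom_ext
  ext a
  exact (huv (u a)).2 ⟨a, rfl⟩

/-- connecting relation -/
def drel (I : Ideal R) (n : ℕ) (u : A →ₗ[R] B) (v : B →ₗ[R] C) (c : HH I n C)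
    (a : HH I (n+1) A) : Prop :=
  ∃ (t : ℕ) (g : (Pt I t).complex.X n ⟶ oA B) (k : cocyc (Pt I t).complex n (oA C))
    (h : cocyc (Pt I t).complex (n+1) (oA A)),
    g ≫ ModuleCat.ofHom v = k.1 ∧ h.1 ≫ ModuleCat.ofHom u = (Pt I t).complex.d (n+1) n ≫ g ∧
    cls I t n _ k = c ∧ cls I t (n+1) _ h = a

lemma drel_mono (I : Ideal R) (n : ℕ) (u : A →ₗ[R] B) (v : B →ₗ[R] C) {t t' : ℕ} (ht : t ≤ t')
    (g : (Pt I t).complex.X n ⟶ oA B) (k : cocyc (Pt I t).complex n (oA C))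
    (h : cocyc (Pt I t).complex (n+1) (oA A))
    (h1 : g ≫ ModuleCat.ofHom v = k.1)
    (h2 : h.1 ≫ ModuleCat.ofHom u = (Pt I t).complex.d (n+1) n ≫ g) :
    ((ph I ht).f n ≫ g) ≫ ModuleCat.ofHom v = (preC (ph I ht) n _ k).1 ∧
    (preC (ph I ht) (n+1) _ h).1 ≫ ModuleCat.ofHom u =
      (Pt I t').complex.d (n+1) n ≫ ((ph I ht).f n ≫ g) := by
  constructor
  · simp [preC, ← h1]
  · simp [preC, h2]

lemma drel_add {I : Ideal R} {n : ℕ} {u : A →ₗ[R] B} {v : B →ₗ[R] C} {c c' : HH I n C}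
    {a a' : HH I (n+1) A} (H : drel I n u v c a) (H' : drel I n u v c' a') :
    drel I n u v (c+c') (a+a') := by
  obtain ⟨t, g, k, h, h1, h2, h3, h4⟩ := H
  obtain ⟨t', g', k', h', h1', h2', h3', h4'⟩ := H'
  obtain ⟨p1, p2⟩ := drel_mono I n u v (le_max_left t t') g k h h1 h2
  obtain ⟨q1, q2⟩ := drel_mono I n u v (le_max_right t t') g' k' h' h1' h2'
  refine ⟨max t t', (ph I (le_max_left t t')).f n ≫ g + (ph I (le_max_right t t')).f n ≫ g',
    preC (ph I (le_max_left t t')) n _ k + preC (ph I (le_max_right t t')) n _ k',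
    preC (ph I (le_max_left t t')) (n+1) _ h + preC (ph I (le_max_right t t')) (n+1) _ h',
    ?_, ?_, ?_, ?_⟩
  · rw [Preadditive.add_comp, p1, q1]; rfl
  · rw [Preadditive.comp_add, ← p2, ← q2, ← Preadditive.add_comp]; rfl
  · rw [map_add, cls_trans I (le_max_left t t') n _ k, cls_trans I (le_max_right t t') n _ k', h3, h3']
  · rw [map_add, cls_trans I (le_max_left t t') (n+1) _ h,
      cls_trans I (le_max_right t t') (n+1) _ h', h4, h4']

lemma drel_smul {I : Ideal R} {n : ℕ} {u : A →ₗ[R] B} {v : B →ₗ[R] C} {c : HH I n C}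
    {a : HH I (n+1) A} (r : R) (H : drel I n u v c a) :
    drel I n u v (r • c) (r • a) := by
  obtain ⟨t, g, k, h, h1, h2, h3, h4⟩ := H
  refine ⟨t, r • g, r • k, r • h, ?_, ?_, ?_, ?_⟩
  · rw [Linear.smul_comp, h1]; rfl
  · rw [Linear.comp_smul, ← h2, ← Linear.smul_comp]; rfl
  · rw [map_smul, h3]
  · rw [map_smul, h4]

lemma drel_total (I : Ideal R) (n : ℕ) {u : A →ₗ[R] B} {v : B →ₗ[R] C}
    (hu : Function.Injective u) (huv : Function.Exact u v) (hv : Function.Surjective v)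
    (c : HH I n C) : ∃ a, drel I n u v c a := by
  obtain ⟨t, k, rfl⟩ := cls_surj I n _ c
  obtain ⟨g, hg⟩ := proj_lift I t n v hv k.1
  obtain ⟨h, hh⟩ := ker_lift u v hu huv ((Pt I t).complex.d (n+1) n ≫ g) (by
    rw [Category.assoc, hg]; exact k.2)
  refine ⟨_, t, g, k, ⟨h, ?_⟩, hg, hh, rfl, rfl⟩
  rw [mem_cocyc]
  apply mono_cancel u hu
  rw [Category.assoc, hh]
  simp

lemma drel_im {I : Ideal R} {n : ℕ} {u : A →ₗ[R] B} {v : B →ₗ[R] C} {c : HH I n C}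
    {a : HH I (n+1) A} (H : drel I n u v c a) : Hm I (n+1) u a = 0 := by
  obtain ⟨t, g, k, h, h1, h2, h3, h4⟩ := H
  rw [← h4, Hm_cls]
  exact ph_refl_cls _ _ _ _ g _ h2.symm

lemma drel_of_ker {I : Ideal R} {n : ℕ} {u : A →ₗ[R] B} {v : B →ₗ[R] C} 
    (huv : Function.Exact u v)
    (a : HH I (n+1) A) (ha : Hm I (n+1) u a = 0) : ∃ c, drel I n u v c a := by
  obtain ⟨t, h, rfl⟩ := cls_surj I (n+1) _ a
  rw [Hm_cls] at ha
  obtain ⟨t', ht, g, hg⟩ := exists_coboundary _ _ _ _ _ ha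
  refine ⟨_, t', g, ⟨g ≫ ModuleCat.ofHom v, ?_⟩, preC (ph I ht) (n+1) _ h, rfl, ?_, rfl, ?_⟩
  · rw [mem_cocyc, ← Category.assoc, hg]
    simp [postC, comp_uv u v huv]
  · rw [hg]; simp [postC, preC]
  · exact cls_trans I ht (n+1) _ h

lemma drel_ker {I : Ideal R} {n : ℕ} {u : A →ₗ[R] B} {v : B →ₗ[R] C} 
    (huv : Function.Exact u v)
    {c : HH I n C} (H : drel I n u v c 0) : ∃ b, Hm I n v b = c := by
  obtain ⟨t, g, k, h, h1, h2, h3, h4⟩ := H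
  obtain ⟨t', ht, l, hl⟩ := exists_coboundary _ _ _ _ _ h4
  obtain ⟨p1, p2⟩ := drel_mono I n u v ht g k h h1 h2
  refine ⟨cls I t' n _ ⟨(ph I ht).f n ≫ g - l ≫ ModuleCat.ofHom u, ?_⟩, ?_⟩
  · rw [mem_cocyc, Preadditive.comp_sub, ← p2, ← Category.assoc, hl]
    exact sub_self _
  · rw [Hm_cls, ← h3, ← cls_trans I ht]
    congr 1
    apply Subtype.ext
    rw [← p1]
    simp [postC, Preadditive.sub_comp, comp_uv u v huv]

lemma drel_zero {I : Ideal R} {n : ℕ} {u : A →ₗ[R] B} {v : B →ₗ[R] C} 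
    (hu : Function.Injective u) (huv : Function.Exact u v) (hv : Function.Surjective v)
    {a : HH I (n+1) A} (H : drel I n u v 0 a) : a = 0 := by
  obtain ⟨t, g, k, h, h1, h2, h3, h4⟩ := H
  have key : ∃ (t' : ℕ) (ht : t ≤ t') (l : (Pt I t').complex.X n ⟶ oA B), 
      l ≫ ModuleCat.ofHom v = (ph I ht).f n ≫ k.1 ∧ (Pt I t').complex.d (n+1) n ≫ l = 0 := by
    cases n with
    | zero =>
      obtain ⟨t', ht, h0⟩ := exists_zero _ _ _ _ h3
      exact ⟨t', ht, 0, by simp [h0], by simp⟩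
    | succ n =>
      obtain ⟨t', ht, l, hl⟩ := exists_coboundary _ _ _ _ _ h3
      obtain ⟨l', hl'⟩ := proj_lift I t' n v hv l
      refine ⟨t', ht, (Pt I t').complex.d (n+1) n ≫ l', ?_, ?_⟩
      · rw [Category.assoc, hl', hl]
      · simp
  obtain ⟨t', ht, l, hl, hl2⟩ := key
  obtain ⟨p1, p2⟩ := drel_mono I n u v ht g k h h1 h2
  obtain ⟨m, hm⟩ := ker_lift u v hu huv ((ph I ht).f n ≫ g - l) (by
    rw [Preadditive.sub_comp, p1, hl]; exact sub_self _)
  rw [← h4, ← cls_trans I ht]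
  apply ph_refl_cls _ _ _ _ m
  apply mono_cancel u hu
  rw [Category.assoc, hm, p2, Preadditive.comp_sub, hl2, sub_zero]

/-- exactness in the middle -/
lemma exact_mid {I : Ideal R} {n : ℕ} {u : A →ₗ[R] B} {v : B →ₗ[R] C} 
    (hu : Function.Injective u) (huv : Function.Exact u v) (hv : Function.Surjective v)
    (b : HH I n B) (hb : Hm I n v b = 0) : ∃ a, Hm I n u a = b := by
  obtain ⟨t, f, rfl⟩ := cls_surj I n _ b
  rw [Hm_cls] at hb
  have key : ∃ (t' : ℕ) (ht : t ≤ t') (f' : cocyc (Pt I t').complex n (oA B)),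
      cls I t' n _ f' = cls I t n _ f ∧ f'.1 ≫ ModuleCat.ofHom v = 0 := by
    cases n with
    | zero =>
      obtain ⟨t', ht, h0⟩ := exists_zero _ _ _ _ hb
      refine ⟨t', ht, preC (ph I ht) 0 _ f, cls_trans I ht _ _ f, ?_⟩
      simpa [preC, postC] using h0
    | succ n =>
      obtain ⟨t', ht, l, hl⟩ := exists_coboundary _ _ _ _ _ hb
      obtain ⟨l', hl'⟩ := proj_lift I t' n v hv l
      let q : cocyc (Pt I t').complex (n+1) (oA B) := ⟨(Pt I t').complex.d (n+1) n ≫ l', by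
        simp [mem_cocyc]⟩
      refine ⟨t', ht, preC (ph I ht) (n+1) _ f - q, ?_, ?_⟩
      · rw [map_sub, cls_trans I ht (n+1) _ f, ph_refl_cls _ _ _ _ l' q rfl, sub_zero]
      · change ((ph I ht).f (n+1) ≫ f.1 - (Pt I t').complex.d (n+1) n ≫ l') ≫ _ = 0
        rw [Preadditive.sub_comp, Category.assoc, Category.assoc, hl', hl]
        simp [postC]
  obtain ⟨t', ht, f', h1, h2⟩ := key
  obtain ⟨g, hg⟩ := ker_lift u v hu huv f'.1 h2
  refine ⟨cls I t' n _ ⟨g, ?_⟩, ?_⟩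
  · rw [mem_cocyc]
    apply mono_cancel u hu
    rw [Category.assoc, hg, Limits.zero_comp]
    exact f'.2
  · rw [Hm_cls, ← h1]
    congr 1
    exact Subtype.ext hg

lemma Hm_comp_zero (I : Ideal R) (n : ℕ) {u : A →ₗ[R] B} {v : B →ₗ[R] C} 
    (huv : Function.Exact u v) (a : HH I n A) : Hm I n v (Hm I n u a) = 0 := by
  obtain ⟨t, f, rfl⟩ := cls_surj I n _ a
  rw [Hm_cls, Hm_cls, ← map_zero (cls I t n (oA C))]
  congr 1
  apply Subtype.ext
  simp [postC, comp_uv u v huv]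

/-- H^0 is left exact -/
lemma H0_inj {I : Ideal R} {u : A →ₗ[R] B} (hu : Function.Injective u) :
    Function.Injective (Hm I 0 u) := by
  rw [injective_iff_map_eq_zero]
  intro a ha
  obtain ⟨t, f, rfl⟩ := cls_surj I 0 _ a
  rw [Hm_cls] at ha
  obtain ⟨t', ht, h0⟩ := exists_zero _ _ _ _ ha
  rw [← cls_trans I ht, ← map_zero (cls I t' 0 (oA A))]
  congr 1
  apply Subtype.ext
  apply mono_cancel u hu
  simpa [preC, postC] using h0

lemma H_subsingleton (I : Ideal R) (n : ℕ) [Subsingleton A] : Subsingleton (HH I n A) := by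
  refine subsingleton_of_forall_eq 0 fun z => ?_
  obtain ⟨t, f, rfl⟩ := cls_surj I n _ z
  rw [← map_zero (cls I t n (oA A))]
  congr 1
  apply Subtype.ext
  apply ModuleCat.hom_ext
  ext p
  exact Subsingleton.elim _ _

/-- elements of local cohomology are killed by powers of I -/
lemma H_torsion (I : Ideal R) (n : ℕ) (z : HH I n A) : ∃ t, ∀ a ∈ I ^ t, a • z = 0 := by
  obtain ⟨t, f, rfl⟩ := cls_surj I n _ z
  refine ⟨t, fun a ha => ?_⟩
  rw [← map_smul]
  have h0 : (a • 𝟙 (Pt I t).complex) ≫ (Pt I t).π = 0 := by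
    ext p
    have : ∀ y : R ⧸ (I ^ t), a • y = 0 := by
      intro y
      obtain ⟨r, rfl⟩ := Ideal.Quotient.mk_surjective y
      have : a • (Ideal.Quotient.mk (I ^ t) r) = Ideal.Quotient.mk (I ^ t) (a * r) := rfl
      rw [this, Ideal.Quotient.eq_zero_iff_mem]
      exact Ideal.mul_mem_right _ _ ha
    have h2 : (((a • 𝟙 (Pt I t).complex) ≫ (Pt I t).π).f 0).hom p =
      a • ((Pt I t).π.f 0).hom p := by simp; rfl
    refine h2.trans ?_
    exact this (((Pt I t).π.f 0).hom p)
  let s := ProjectiveResolution.liftHomotopyZero _ h0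
  have hs := s.comm
  cases n with
  | zero =>
    have h1 := hs 0
    rw [Homotopy.dNext_zero_chainComplex, Homotopy.prevD_chainComplex] at h1
    have h2 : a • f = 0 := by
      apply Subtype.ext
      change a • f.1 = 0
      have h3 := congrArg (fun k => k ≫ f.1) h1
      have h4 : (Pt I t).complex.d 1 0 ≫ f.1 = 0 := (mem_cocyc _).1 f.2
      simpa [h4] using h3
    rw [h2, map_zero]
  | succ n =>
    have h1 := hs (n+1)
    rw [Homotopy.dNext_succ_chainComplex, Homotopy.prevD_chainComplex] at h1
    apply ph_refl_cls _ _ _ _ (s.hom n (n+1) ≫ f.1)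
    change _ = a • f.1
    have h3 := congrArg (fun k => k ≫ f.1) h1
    have h4 := (mem_cocyc _).1 f.2
    symm
    simpa [h4] using h3

lemma H_inj_zero (I : Ideal R) (n : ℕ) [Module.Injective R A] : Subsingleton (HH I (n+1) A) := by
  refine subsingleton_of_forall_eq 0 fun z => ?_
  obtain ⟨t, f, rfl⟩ := cls_surj I (n+1) _ z
  have : Injective (oA A : ModuleCat.{0} R) := (Module.injective_iff_injective_object R A).1 inferInstance
  let g := ((Pt I t).exact_succ n).descToInjective f.1 f.2
  exact ph_refl_cls _ _ _ _ g f (((Pt I t).exact_succ n).comp_descToInjective f.1 f.2)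


/-- augmentation -/
def pi0 (I : Ideal R) (t : ℕ) : (Pt I t).complex.X 0 ⟶ Xt I t := (Pt I t).π.f 0

lemma pi0_epi (I : Ideal R) (t : ℕ) : Epi (pi0 I t) := by
  have : Epi ((Pt I t).π.f 0) := inferInstance
  exact this

lemma pi0_d (I : Ideal R) (t : ℕ) : (Pt I t).complex.d 1 0 ≫ pi0 I t = 0 :=
  (Pt I t).complex_d_comp_π_f_zero

lemma pi0_ph (I : Ideal R) {t t' : ℕ} (h : t ≤ t') :
    (ph I h).f 0 ≫ pi0 I t = pi0 I t' ≫ tr I h :=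
  ProjectiveResolution.lift_commutes_zero (tr I h) (Pt I t') (Pt I t)

/-- homs out of R/I^t -/
def hom0 (I : Ideal R) (t : ℕ) (m : A) (hm : ∀ a ∈ I ^ t, a • m = 0) : Xt I t ⟶ oA A :=
  ModuleCat.ofHom (Submodule.liftQ (I ^ t) (LinearMap.toSpanSingleton R A m) (by
    intro a ha
    exact hm a ha) : (R ⧸ I ^ t) →ₗ[R] A)

lemma hom0_apply (I : Ideal R) (t : ℕ) (m : A) (hm : ∀ a ∈ I ^ t, a • m = 0) (r : R) :
    (hom0 I t m hm).hom (Ideal.Quotient.mk (I ^ t) r : R ⧸ I ^ t) = r • m := by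
  rfl

lemma tr_apply (I : Ideal R) {t t' : ℕ} (h : t ≤ t') (r : R) :
    (tr I h).hom (Ideal.Quotient.mk (I ^ t') r : R ⧸ I ^ t') =
      (Ideal.Quotient.mk (I ^ t) r : R ⧸ I ^ t) := rfl

/-- cocycle of a torsion element -/
def coc0 (I : Ideal R) (t : ℕ) (m : A) (hm : ∀ a ∈ I ^ t, a • m = 0) :
    cocyc (Pt I t).complex 0 (oA A) :=
  ⟨pi0 I t ≫ hom0 I t m hm, by
    rw [mem_cocyc, ← Category.assoc]
    have := pi0_d I t
    exact (congrArg (fun k => k ≫ hom0 I t m hm) this).trans Limits.zero_comp⟩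

lemma coc0_surj (I : Ideal R) (t : ℕ) (f : cocyc (Pt I t).complex 0 (oA A)) :
    ∃ m hm, f = coc0 I t m hm := by
  have := pi0_epi I t
  have h4 : (Pt I t).complex.d 1 0 ≫ f.1 = 0 := (mem_cocyc _).1 f.2
  let e := (Pt I t).exact₀
  have : Epi ((Pt I t).π.f 0) := inferInstance
  let φ : Xt I t ⟶ oA A := e.desc f.1 h4
  have hφ : pi0 I t ≫ φ = f.1 := e.g_desc f.1 h4
  let ψ : (R ⧸ I ^ t) →ₗ[R] A := φ.hom
  have hz : ∀ r : R, r • ψ (Ideal.Quotient.mk (I ^ t) 1) = ψ (Ideal.Quotient.mk (I ^ t) r) := by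
    intro r
    rw [← map_smul]
    have : r • (Ideal.Quotient.mk (I ^ t) 1) = Ideal.Quotient.mk (I ^ t) (r * 1) := rfl
    rw [this, mul_one]
  refine ⟨ψ (Ideal.Quotient.mk (I ^ t) 1), ?_, ?_⟩
  · intro a ha
    rw [hz, Ideal.Quotient.eq_zero_iff_mem.2 ha, map_zero]
  · apply Subtype.ext
    change f.1 = pi0 I t ≫ _
    rw [← hφ]
    congr 1
    apply ModuleCat.hom_ext
    apply LinearMap.ext
    intro y
    obtain ⟨r, hr⟩ := Ideal.Quotient.mk_surjective (I := I ^ t) y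
    rw [← hr]
    exact (hz r).symm

lemma coc0_trans (I : Ideal R) {t t' : ℕ} (h : t ≤ t') (m : A) (hm : ∀ a ∈ I ^ t, a • m = 0) :
    preC (ph I h) 0 _ (coc0 I t m hm) =
      coc0 I t' m (fun a ha => hm a (Ideal.pow_le_pow_right h ha)) := by
  apply Subtype.ext
  change (ph I h).f 0 ≫ pi0 I t ≫ _ = pi0 I t' ≫ _
  rw [← Category.assoc, pi0_ph, Category.assoc]
  congr 1
  apply ModuleCat.hom_ext
  apply LinearMap.ext
  intro y
  obtain ⟨r, hr⟩ := Ideal.Quotient.mk_surjective (I := I ^ t') y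
  rw [← hr]
  rfl

lemma coc0_post (I : Ideal R) (t : ℕ) (u : A →ₗ[R] B) (m : A) (hm : ∀ a ∈ I ^ t, a • m = 0) :
    postC _ 0 (ModuleCat.ofHom u) (coc0 I t m hm) =
      coc0 I t (u m) (fun a ha => by rw [← map_smul, hm a ha, map_zero]) := by
  apply Subtype.ext
  change (pi0 I t ≫ _) ≫ _ = pi0 I t ≫ _
  rw [Category.assoc]
  congr 1
  apply ModuleCat.hom_ext
  apply LinearMap.ext
  intro y
  obtain ⟨r, hr⟩ := Ideal.Quotient.mk_surjective (I := I ^ t) y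
  rw [← hr]
  exact map_smul u r m

/-- annihilators of H^0 kill torsion elements -/
lemma H0_kill (I : Ideal R) (t : ℕ) (m : A) (hm : ∀ a ∈ I ^ t, a • m = 0) (r : R)
    (hr : ∀ z : HH I 0 A, r • z = 0) : r • m = 0 := by
  have h1 := hr (cls I t 0 _ (coc0 I t m hm))
  rw [← map_smul] at h1
  obtain ⟨t', ht, h2⟩ := exists_zero _ _ _ _ h1
  have h3 : (ph I ht).f 0 ≫ (coc0 I t m hm).1 = 
     pi0 I t' ≫ hom0 I t' m (fun a ha => hm a (Ideal.pow_le_pow_right ht ha)) :=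
    congrArg Subtype.val (coc0_trans I ht m hm)
  have h4 : pi0 I t' ≫ (r • hom0 I t' m (fun a ha => hm a (Ideal.pow_le_pow_right ht ha))) = 0 := by
    rw [Linear.comp_smul, ← h3, ← Linear.comp_smul]
    exact h2
  have := pi0_epi I t'
  rw [← Limits.comp_zero (f := pi0 I t'), cancel_epi] at h4
  have h5 := congrArg (fun k => k.hom (Ideal.Quotient.mk (I ^ t') 1 : R ⧸ I ^ t')) h4
  change r • ((1 : R) • m) = 0 at h5
  rwa [one_smul] at h5

lemma H0_surj (I : Ideal R) (u : A →ₗ[R] B) (hu : Function.Surjective u)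
    (hA : ∀ m : A, ∃ t, ∀ a ∈ I ^ t, a • m = 0) : Function.Surjective (Hm I 0 u) := by
  intro z
  obtain ⟨t, f, rfl⟩ := cls_surj I 0 _ z
  obtain ⟨m, hm, rfl⟩ := coc0_surj I t f
  obtain ⟨m, rfl⟩ := hu m
  obtain ⟨t', ht'⟩ := hA m
  refine ⟨cls I (max t t') 0 _ (coc0 I _ m
    (fun a ha => ht' a (Ideal.pow_le_pow_right (le_max_right _ _) ha))), ?_⟩
  rw [Hm_cls, coc0_post, ← cls_trans I (le_max_left t t'), coc0_trans]

end
end LC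

namespace LC

section
variable {A B C : Type} [AddCommGroup A] [Module R A] [AddCommGroup B] [Module R B]
  [AddCommGroup C] [Module R C]

lemma les_inj {I : Ideal R} {n : ℕ} {u : A →ₗ[R] B} {v : B →ₗ[R] C}
    (hu : Function.Injective u) (huv : Function.Exact u v) (hv : Function.Surjective v)
    (hC : Subsingleton (HH I n C)) : Function.Injective (Hm I (n+1) u) := by
  rw [injective_iff_map_eq_zero]
  intro a ha
  obtain ⟨c, hc⟩ := drel_of_ker huv a ha
  rw [Subsingleton.elim c 0] at hc
  exact drel_zero hu huv hv hc

lemma drel_of_im (I : Ideal R) (n : ℕ) {u : A →ₗ[R] B} {v : B →ₗ[R] C} (b : HH I n B) :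
    drel I n u v (Hm I n v b) 0 := by
  obtain ⟨t, f, rfl⟩ := cls_surj I n _ b
  refine ⟨t, f.1, postC _ n (ModuleCat.ofHom v) f, 0, rfl, ?_, (Hm_cls ..).symm, map_zero _⟩
  rw [(mem_cocyc _).1 f.2]
  exact Limits.zero_comp

lemma les_surj {I : Ideal R} {n : ℕ} {u : A →ₗ[R] B} {v : B →ₗ[R] C}
    (hu : Function.Injective u) (huv : Function.Exact u v) (hv : Function.Surjective v)
    (hA : Subsingleton (HH I (n+1) A)) : Function.Surjective (Hm I n v) := by
  intro c
  obtain ⟨a, ha⟩ := drel_total I n hu huv hv c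
  rw [Subsingleton.elim a 0] at ha
  exact drel_ker huv ha

lemma les_mid {I : Ideal R} {n : ℕ} {u : A →ₗ[R] B} {v : B →ₗ[R] C}
    (hu : Function.Injective u) (huv : Function.Exact u v) (hv : Function.Surjective v)
    (hA : Subsingleton (HH I n A)) (hC : Subsingleton (HH I n C)) : Subsingleton (HH I n B) := by
  refine subsingleton_of_forall_eq 0 fun b => ?_
  obtain ⟨a, rfl⟩ := exact_mid hu huv hv b (Subsingleton.elim _ _)
  rw [Subsingleton.elim a 0, map_zero]

lemma les_surj_u {I : Ideal R} {n : ℕ} {u : A →ₗ[R] B} {v : B →ₗ[R] C}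
    (hu : Function.Injective u) (huv : Function.Exact u v) (hv : Function.Surjective v)
    (hC : Subsingleton (HH I n C)) : Function.Surjective (Hm I n u) := fun b =>
  exact_mid hu huv hv b (Subsingleton.elim _ _)

lemma les_kill {I : Ideal R} {n : ℕ} {u : A →ₗ[R] B} {v : B →ₗ[R] C}
    (hu : Function.Injective u) (huv : Function.Exact u v) (hv : Function.Surjective v)
    (r s : R) (hr : ∀ b : HH I n B, r • b = 0) (hs : ∀ a : HH I (n+1) A, s • a = 0)
    (c : HH I n C) : (r * s) • c = 0 := by
  obtain ⟨a, ha⟩ := drel_total I n hu huv hv c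
  have h1 := drel_smul s ha
  rw [hs] at h1
  obtain ⟨b, hb⟩ := drel_ker huv h1
  rw [mul_smul, ← hb, ← map_smul, hr, map_zero]

/-- connecting map -/
def dmap (I : Ideal R) (n : ℕ) {u : A →ₗ[R] B} {v : B →ₗ[R] C}
    (hu : Function.Injective u) (huv : Function.Exact u v) (hv : Function.Surjective v) :
    HH I n C →ₗ[R] HH I (n+1) A where
  toFun c := (drel_total I n hu huv hv c).choose
  map_add' c c' := by
    have h1 := (drel_total I n hu huv hv c).choose_spec
    have h2 := (drel_total I n hu huv hv c').choose_spec
    have h3 := (drel_total I n hu huv hv (c+c')).choose_spec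
    have h4 := drel_add h3 (drel_smul (-1 : R) (drel_add h1 h2))
    have h5 : (c + c') + (-1 : R) • (c + c') = 0 := by rw [neg_one_smul, add_neg_cancel]
    rw [h5] at h4
    have h6 := drel_zero hu huv hv h4
    rw [neg_one_smul, ← sub_eq_add_neg, sub_eq_zero] at h6
    exact h6
  map_smul' r c := by
    have h1 := (drel_total I n hu huv hv c).choose_spec
    have h3 := (drel_total I n hu huv hv (r • c)).choose_spec
    have h4 := drel_add h3 (drel_smul (-1 : R) (drel_smul r h1))
    have h5 : (r • c) + (-1 : R) • (r • c) = 0 := by rw [neg_one_smul, add_neg_cancel]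
    rw [h5] at h4
    have h6 := drel_zero hu huv hv h4
    rw [neg_one_smul, ← sub_eq_add_neg, sub_eq_zero] at h6
    exact h6

lemma les_fin [IsNoetherianRing R] {I : Ideal R} {n : ℕ} {u : A →ₗ[R] B} {v : B →ₗ[R] C}
    (hu : Function.Injective u) (huv : Function.Exact u v) (hv : Function.Surjective v)
    (hB : Module.Finite R (HH I n B)) (hA : Module.Finite R (HH I (n+1) A)) :
    Module.Finite R (HH I n C) := by
  refine ⟨Submodule.fg_of_fg_map_of_fg_inf_ker (dmap I n hu huv hv) ?_ ?_⟩
  · exact IsNoetherian.noetherian _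
  · have : (⊤ : Submodule R (HH I n C)) ⊓ LinearMap.ker (dmap I n hu huv hv) ≤
      LinearMap.range (Hm I n v) := by
      rintro c ⟨-, hc⟩
      have h1 := (drel_total I n hu huv hv c).choose_spec
      rw [show (drel_total I n hu huv hv c).choose = 0 from hc] at h1
      exact drel_ker huv h1
    have h2 : IsNoetherian R (LinearMap.range (Hm I n v)) := inferInstance
    exact (isNoetherian_submodule.1 h2) _ this

end

/-- I-torsion modules -/
def Tor (I : Ideal R) (N : Type) [AddCommGroup N] [Module R N] : Prop :=
  ∀ m : N, ∃ t, ∀ a ∈ I ^ t, a • m = 0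

/-- torsion submodule -/
def Gam (I : Ideal R) (N : Type) [AddCommGroup N] [Module R N] : Submodule R N where
  carrier := {m | ∃ t, ∀ a ∈ I ^ t, a • m = 0}
  zero_mem' := ⟨0, fun a _ => smul_zero a⟩
  add_mem' := by
    rintro m m' ⟨t, ht⟩ ⟨t', ht'⟩
    refine ⟨max t t', fun a ha => ?_⟩
    rw [smul_add, ht a (Ideal.pow_le_pow_right (le_max_left _ _) ha),
      ht' a (Ideal.pow_le_pow_right (le_max_right _ _) ha), add_zero]
  smul_mem' := by
    rintro r m ⟨t, ht⟩
    refine ⟨t, fun a ha => ?_⟩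
    rw [smul_comm, ht a ha, smul_zero]

lemma mem_Gam {I : Ideal R} {N : Type} [AddCommGroup N] [Module R N] (m : N) :
    m ∈ Gam I N ↔ ∃ t, ∀ a ∈ I ^ t, a • m = 0 := Iff.rfl

lemma Tor_Gam (I : Ideal R) (N : Type) [AddCommGroup N] [Module R N] : Tor I (Gam I N) := by
  rintro ⟨m, t, ht⟩
  exact ⟨t, fun a ha => Subtype.ext (ht a ha)⟩

lemma Tor_sub {I : Ideal R} {N : Type} [AddCommGroup N] [Module R N] (h : Tor I N)
    (K : Submodule R N) : Tor I K := by
  rintro ⟨m, hm⟩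
  obtain ⟨t, ht⟩ := h m
  exact ⟨t, fun a ha => Subtype.ext (ht a ha)⟩

lemma Tor_quot {I : Ideal R} {N : Type} [AddCommGroup N] [Module R N] (h : Tor I N)
    (K : Submodule R N) : Tor I (N ⧸ K) := by
  intro m
  obtain ⟨m, rfl⟩ := K.mkQ_surjective m
  obtain ⟨t, ht⟩ := h m
  exact ⟨t, fun a ha => by rw [← map_smul, ht a ha, map_zero]⟩

lemma Tor_fg {I : Ideal R} {N : Type} [AddCommGroup N] [Module R N] [Module.Finite R N]
    (h : Tor I N) : ∃ t, ∀ a ∈ I ^ t, ∀ m : N, a • m = 0 := by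
  obtain ⟨S, hS⟩ := (inferInstance : Module.Finite R N).fg_top
  choose f hf using h
  refine ⟨S.sup f, fun a ha m => ?_⟩
  have hm : m ∈ Submodule.span R (S : Set N) := hS ▸ Submodule.mem_top
  induction hm using Submodule.span_induction with
  | mem x hx => exact hf x a (Ideal.pow_le_pow_right (Finset.le_sup hx) ha)
  | zero => exact smul_zero a
  | add x y _ _ hx hy => rw [smul_add, hx, hy, add_zero]
  | smul r x _ hx => rw [smul_comm, hx, smul_zero]

lemma Gam_injective [IsNoetherianRing R] (I : Ideal R) (E : Type) [AddCommGroup E] [Module R E]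
    [Module.Injective R E] : Module.Injective R (Gam I E) := by
  apply Module.Baer.injective
  intro J g
  -- the image of g is killed by a power of I
  obtain ⟨t, ht⟩ := Tor_fg (Tor_sub (Tor_Gam I E) (LinearMap.range g))
  obtain ⟨k, hk⟩ := Ideal.exists_pow_inf_eq_pow_smul I (J : Submodule R R)
  have h1 := hk (t + k) (Nat.le_add_left _ _)
  rw [Nat.add_sub_cancel] at h1
  have h2 : ∀ (r : R) (hr : r ∈ J), r ∈ I ^ (t + k) → g ⟨r, hr⟩ = 0 := by
    intro r hr hr2
    have h3 : r ∈ I ^ t • (J : Submodule R R) := by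
      have : r ∈ I ^ (t + k) • (⊤ : Submodule R R) ⊓ J := ⟨by simpa using hr2, hr⟩
      rw [h1] at this
      exact Submodule.smul_mono le_rfl inf_le_right this
    have h4 : I ^ t • (J : Submodule R R) ≤ Submodule.map J.subtype (LinearMap.ker g) := by
      rw [Submodule.smul_le]
      intro a ha n hn
      refine ⟨a • ⟨n, hn⟩, ?_, rfl⟩
      change g _ = 0
      rw [map_smul]
      exact congrArg Subtype.val (ht a ha ⟨g ⟨n, hn⟩, ⟨_, rfl⟩⟩)
    obtain ⟨q, hq, rfl⟩ := h4 h3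
    exact hq
  let Z : Submodule R J := Submodule.comap J.subtype (I ^ (t + k))
  let f1 : (J ⧸ Z) →ₗ[R] (R ⧸ I ^ (t + k)) := Submodule.mapQ Z _ J.subtype le_rfl
  have hf1 : Function.Injective f1 := by
    rw [← LinearMap.ker_eq_bot, Submodule.ker_mapQ]
    simp [Z]
  let f2 : (J ⧸ Z) →ₗ[R] E := Submodule.liftQ Z ((Gam I E).subtype ∘ₗ g) (by
    rintro ⟨r, hr⟩ hr2
    exact congrArg Subtype.val (h2 r hr hr2))
  obtain ⟨h, hh⟩ := Module.Injective.out f1 hf1 f2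
  let e : E := h (Ideal.Quotient.mk _ 1)
  have he : ∀ r : R, r • e = h (Ideal.Quotient.mk _ r) := by
    intro r
    rw [← map_smul]
    have : r • (Ideal.Quotient.mk (I ^ (t+k)) 1) = Ideal.Quotient.mk (I ^ (t+k)) (r * 1) := rfl
    rw [this, mul_one]
  have he2 : e ∈ Gam I E := ⟨t + k, fun a ha => by
    rw [he, Ideal.Quotient.eq_zero_iff_mem.2 ha, map_zero]⟩
  refine ⟨LinearMap.toSpanSingleton R _ ⟨e, he2⟩, ?_⟩
  intro r hr
  apply Subtype.ext
  change r • e = _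
  rw [he]
  exact hh (Submodule.Quotient.mk ⟨r, hr⟩)

lemma exists_inj (N : Type) [AddCommGroup N] [Module R N] :
    ∃ (E : ModuleCat.{0} R) (u : N →ₗ[R] E), Module.Injective R E ∧ Function.Injective u := by
  let E := Injective.under (ModuleCat.of R N)
  refine ⟨E, (Injective.ι (ModuleCat.of R N)).hom, ?_, ?_⟩
  · exact (Module.injective_iff_injective_object R E).2 (inferInstanceAs (Injective E))
  · exact (ModuleCat.mono_iff_injective _).1 inferInstance

/-- higher local cohomology of torsion modules vanishes -/
lemma Tor_van [IsNoetherianRing R] (I : Ideal R) (j : ℕ) : ∀ (N : Type) [AddCommGroup N]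
    [Module R N], Tor I N → Subsingleton (HH I (j+1) N) := by
  induction j with
  | zero =>
    intro N _ _ hN
    obtain ⟨E, u, hE, hu⟩ := exists_inj (R := R) N
    have := Gam_injective I E
    let w : N →ₗ[R] Gam I E := u.codRestrict _ (fun m => by
      obtain ⟨t, ht⟩ := hN m
      exact ⟨t, fun a ha => by rw [← map_smul, ht a ha, map_zero]⟩)
    have hw : Function.Injective w := fun a b h => hu (congrArg Subtype.val h)
    have h1 := H0_surj I (LinearMap.range w).mkQ (Submodule.mkQ_surjective _) (Tor_Gam I E)
    have h3 := H_inj_zero (A := Gam I E) I 0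
    refine subsingleton_of_forall_eq 0 fun z => ?_
    obtain ⟨c, hc⟩ := drel_of_ker (LinearMap.exact_map_mkQ_range w) z (Subsingleton.elim _ _)
    obtain ⟨b, rfl⟩ := h1 c
    have h4 := drel_add hc (drel_smul (-1 : R) (drel_of_im I 0 (u := w) b))
    rw [neg_one_smul, add_neg_cancel, smul_zero, add_zero] at h4
    exact drel_zero hw (LinearMap.exact_map_mkQ_range w) (Submodule.mkQ_surjective _) h4
  | succ j ih =>
    intro N _ _ hN
    obtain ⟨E, u, hE, hu⟩ := exists_inj (R := R) N
    have := Gam_injective I E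
    let w : N →ₗ[R] Gam I E := u.codRestrict _ (fun m => by
      obtain ⟨t, ht⟩ := hN m
      exact ⟨t, fun a ha => by rw [← map_smul, ht a ha, map_zero]⟩)
    have hw : Function.Injective w := fun a b h => hu (congrArg Subtype.val h)
    have h1 := ih _ (Tor_quot (Tor_Gam I E) (LinearMap.range w))
    have h2 := les_inj (I := I) hw (LinearMap.exact_map_mkQ_range w) (Submodule.mkQ_surjective _) h1
    have h3 := H_inj_zero (A := Gam I E) I (j+1)
    exact h2.subsingleton

end LC

namespace LC

/-- multiplication -/
abbrev mulL (y : R) (Q : Type) [AddCommGroup Q] [Module R Q] : Q →ₗ[R] Q := y • LinearMap.id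

lemma ann_sub {N : Type} [AddCommGroup N] [Module R N] (K : Submodule R N) :
    Module.annihilator R N ≤ Module.annihilator R K :=
  LinearMap.annihilator_le_of_injective K.subtype K.injective_subtype

lemma ann_quot {N : Type} [AddCommGroup N] [Module R N] (K : Submodule R N) :
    Module.annihilator R N ≤ Module.annihilator R (N ⧸ K) :=
  LinearMap.annihilator_le_of_surjective K.mkQ K.mkQ_surjective

lemma ann_range (y : R) (Q : Type) [AddCommGroup Q] [Module R Q] :
    y ∈ Module.annihilator R (Q ⧸ LinearMap.range (mulL y Q)) := by
  rw [Module.mem_annihilator]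
  intro m
  obtain ⟨m, rfl⟩ := Submodule.mkQ_surjective _ m
  rw [← map_smul]
  exact (Submodule.Quotient.mk_eq_zero _).2 ⟨m, rfl⟩

lemma rad_aux {I J J' : Ideal R} (h : I ≤ J.radical) (h' : J ≤ J'.radical) : I ≤ J'.radical :=
  h.trans (Ideal.radical_le_radical_iff.2 h')

lemma rad_step {I : Ideal R} {y : R} {L : List R} {a a' : Ideal R}
    (h : I ≤ (Ideal.ofList (y :: L) ⊔ a).radical) (ha : a ≤ a') (hy : y ∈ a'.radical) :
    I ≤ (Ideal.ofList L ⊔ a').radical := by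
  refine rad_aux h ?_
  rw [Ideal.ofList_cons]
  refine sup_le (sup_le ?_ ?_) ?_
  · rw [Ideal.span_singleton_le_iff_mem]
    exact Ideal.radical_mono le_sup_right hy
  · exact le_sup_left.trans Ideal.le_radical
  · exact (ha.trans le_sup_right).trans Ideal.le_radical

lemma zero_of_inj {I : Ideal R} {Q : Type} [AddCommGroup Q] [Module R Q] {y : R} (hy : y ∈ I)
    (j : ℕ) (h : Function.Injective (Hm I j (mulL y Q))) : Subsingleton (HH I j Q) := by
  refine subsingleton_of_forall_eq 0 fun z => ?_
  obtain ⟨t, ht⟩ := H_torsion I j z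
  have h1 := ht (y ^ t) (Ideal.pow_mem_pow hy t)
  have : ∀ t : ℕ, y ^ t • z = 0 → z = 0 := by
    intro t
    induction t with
    | zero => intro h; simpa using h
    | succ t ih =>
      intro hh
      apply ih
      apply h
      rw [map_zero, Hm_smul, smul_smul, ← pow_succ']
      exact hh
  exact this t h1

lemma tor_of_rad [IsNoetherianRing R] {I : Ideal R} {N : Type} [AddCommGroup N] [Module R N]
    (h : I ≤ (Module.annihilator R N).radical) : Tor I N := by
  obtain ⟨k, hk⟩ := Ideal.exists_pow_le_of_le_radical_of_fg h (IsNoetherian.noetherian I)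
  exact fun m => ⟨k, fun a ha => Module.mem_annihilator.1 (hk ha) m⟩

lemma van [IsNoetherianRing R] (I : Ideal R) (L : List R) : ∀ (N : Type) [AddCommGroup N]
    [Module R N] [Module.Finite R N], (∀ a ∈ L, a ∈ I) →
    I ≤ (Ideal.ofList L ⊔ Module.annihilator R N).radical →
    ∀ j, L.length < j → Subsingleton (HH I j N) := by
  induction L with
  | nil =>
    intro N _ _ _ _ h j hj
    rw [Ideal.ofList_nil, bot_sup_eq] at h
    obtain ⟨j, rfl⟩ := Nat.exists_eq_succ_of_ne_zero (Nat.ne_of_gt hj)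
    exact Tor_van I j N (tor_of_rad h)
  | cons y L ih =>
    intro N _ _ _ hL h j hj
    have hL' : ∀ a ∈ L, a ∈ I := fun a ha => hL a (List.mem_cons_of_mem _ ha)
    have hyI : y ∈ I := hL y List.mem_cons_self
    obtain ⟨k, hk⟩ := monotone_stabilizes_iff_noetherian.mpr
      (inferInstance : IsNoetherian R N) (LinearMap.iterateKer (mulL y N))
    let K : Submodule R N := LinearMap.ker ((mulL y N) ^ k)
    have hpow : ∀ (k : ℕ) (m : N), ((mulL y N) ^ k) m = y ^ k • m := by
      intro k m
      rw [smul_pow]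
      simp
    have hreg : ∀ m : N, y • m ∈ K → m ∈ K := by
      intro m hm
      have h1 : m ∈ LinearMap.ker ((mulL y N) ^ (k+1)) := by
        rw [LinearMap.mem_ker, hpow, pow_succ, mul_smul]
        have := LinearMap.mem_ker.1 hm
        rwa [hpow] at this
      have h2 : K = LinearMap.ker ((mulL y N) ^ (k+1)) := hk (k+1) (Nat.le_succ k)
      rw [h2]; exact h1
    have hKann : y ∈ (Module.annihilator R K).radical := by
      refine ⟨k, ?_⟩
      rw [Module.mem_annihilator]
      rintro ⟨m, hm⟩
      apply Subtype.ext
      have := LinearMap.mem_ker.1 hm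
      rwa [hpow] at this
    have hK := ih K hL' (rad_step h (ann_sub K) hKann) j ((Nat.lt_succ_self _).trans hj)
    let Q := N ⧸ K
    have hinj : Function.Injective (mulL y Q) := by
      rw [injective_iff_map_eq_zero]
      intro m hm
      obtain ⟨m, rfl⟩ := K.mkQ_surjective m
      have h1 : K.mkQ (y • m) = 0 := by rw [map_smul]; exact hm
      have h2 := (Submodule.Quotient.mk_eq_zero K).1 h1
      exact (Submodule.Quotient.mk_eq_zero K).2 (hreg m h2)
    have hQ : Subsingleton (HH I j Q) := by
      obtain ⟨j, rfl⟩ := Nat.exists_eq_succ_of_ne_zero (Nat.ne_of_gt ((Nat.zero_le _).trans_lt hj))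
      have h3 := ih (Q ⧸ LinearMap.range (mulL y Q)) hL'
        (rad_step h ((ann_quot K).trans (ann_quot _)) (Ideal.le_radical (ann_range y Q))) j
        (by simpa using hj)
      exact zero_of_inj hyI _ (les_inj hinj (LinearMap.exact_map_mkQ_range _)
        (Submodule.mkQ_surjective _) h3)
    exact les_mid K.injective_subtype (LinearMap.exact_subtype_mkQ K) K.mkQ_surjective hK hQ

lemma avoid (z : R) (J : Ideal R) (S : Finset (Ideal R)) (hS : ∀ p ∈ S, p.IsPrime)
    (h : ∀ p ∈ S, ¬ (Ideal.span {z} ⊔ J ≤ p)) : ∃ b ∈ J, ∀ p ∈ S, z + b ∉ p := by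
  classical
  induction S using Finset.strongInduction with
  | H S ih =>
    rcases S.eq_empty_or_nonempty with rfl | hne
    · exact ⟨0, J.zero_mem, by simp⟩
    obtain ⟨p, hp⟩ := S.exists_minimal hne
    have hpS := hp.1
    obtain ⟨b, hb, hb2⟩ := ih (S.erase p) (Finset.erase_ssubset hpS)
      (fun q hq => hS q (Finset.mem_of_mem_erase hq)) (fun q hq => h q (Finset.mem_of_mem_erase hq))
    by_cases hy : z + b ∈ p
    · have hprime := hS p hpS
      have hJ : ¬ J ≤ p := by
        intro hJ
        apply h p hpS
        refine sup_le ?_ hJ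
        rw [Ideal.span_singleton_le_iff_mem]
        exact (Ideal.add_mem_iff_left p (hJ hb)).1 hy
      have h2 : ¬ (J ⊓ (S.erase p).inf id ≤ p) := by
        intro h3
        rcases (hprime.inf_le).1 h3 with h4 | h4
        · exact hJ h4
        · obtain ⟨q, hq, hqp⟩ := (hprime.inf_le').1 h4
          have h5 : p ≤ q := hp.2 (Finset.mem_of_mem_erase hq) hqp
          exact Finset.ne_of_mem_erase hq (le_antisymm hqp h5)
      obtain ⟨c, hc, hcp⟩ := SetLike.not_le_iff_exists.1 h2
      refine ⟨b + c, J.add_mem hb hc.1, fun q hq hmem => ?_⟩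
      rw [← add_assoc] at hmem
      by_cases hqp : q = p
      · subst hqp
        exact hcp ((Ideal.add_mem_iff_right q hy).1 hmem)
      · have hq' : q ∈ S.erase p := Finset.mem_erase.2 ⟨hqp, hq⟩
        have hcq : c ∈ q := (Finset.inf_le hq' : (S.erase p).inf id ≤ id q) hc.2
        exact hb2 q hq' ((Ideal.add_mem_iff_left q hcq).1 hmem)
    · refine ⟨b, hb, fun q hq => ?_⟩
      by_cases hqp : q = p
      · rwa [hqp]
      · exact hb2 q (Finset.mem_erase.2 ⟨hqp, hq⟩)

/-- existence of a regular element in a coset -/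
lemma exists_regular [IsNoetherianRing R] (I : Ideal R) (z : R) (J : Ideal R) (Q : Type)
    [AddCommGroup Q] [Module R Q] [Module.Finite R Q] (hG : Gam I Q = ⊥)
    (h : I ≤ (Ideal.span {z} ⊔ J ⊔ Module.annihilator R Q).radical) :
    ∃ b ∈ J, Function.Injective (mulL (z + b) Q) := by
  have hfin := associatedPrimes.finite R Q
  obtain ⟨b, hb, hb2⟩ := avoid z J hfin.toFinset
    (fun p hp => ((hfin.mem_toFinset).1 hp).1) (by
      intro p hp hle
      have hp' := (hfin.mem_toFinset).1 hp
      have hprime : p.IsPrime := hp'.1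
      have h1 : Module.annihilator R Q ≤ p := by
        have := IsAssociatedPrime.annihilator_le hp'
        rwa [Submodule.annihilator_top] at this
      have h2 : I ≤ p := by
        refine h.trans ?_
        rw [hprime.isRadical.radical_le_iff]
        exact sup_le hle h1
      obtain ⟨m, hm⟩ := hp'.2
      rw [hm] at h2
      obtain ⟨k, hk⟩ := Ideal.exists_pow_le_of_le_radical_of_fg h2 (IsNoetherian.noetherian I)
      have h3 : m ∈ Gam I Q := ⟨k, fun a ha => by
        have := hk ha
        rw [Submodule.mem_colon_singleton] at this
        simpa using this⟩
      rw [hG, Submodule.mem_bot] at h3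
      apply hprime.ne_top
      rw [hm, h3]
      rw [Ideal.eq_top_iff_one]
      apply Ideal.le_radical
      rw [Submodule.mem_colon_singleton]
      simp)
  refine ⟨b, hb, ?_⟩
  rw [injective_iff_map_eq_zero]
  intro m hm
  by_contra hne
  have h5 : (z + b) ∈ { r : R | ∃ x : Q, x ≠ 0 ∧ r • x = 0 } := ⟨m, hne, hm⟩
  rw [← biUnion_associatedPrimes_eq_zero_divisors] at h5
  simp only [Set.mem_iUnion] at h5
  obtain ⟨p, hp, hzp⟩ := h5
  exact hb2 p ((hfin.mem_toFinset).2 hp) hzp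

lemma kill_torsion [IsNoetherianRing R] (I : Ideal R) (hjac : I ≤ (⊥ : Ideal R).jacobson)
    (L : List R) : ∀ s : ℕ, ∃ t : ℕ, ∀ (M : Type) [AddCommGroup M] [Module R M]
    [Module.Finite R M] (x : R), x ∈ I → (∀ a ∈ L, a ∈ I) →
    I ≤ (Ideal.ofList (x :: L) ⊔ Module.annihilator R M).radical →
    (∀ j ≤ L.length, ∀ r ∈ I ^ s, ∀ z : HH I j M, r • z = 0) →
    ∀ m : M, x • m = 0 → ∀ r ∈ I ^ t, r • m = 0 := by
  induction L with
  | nil =>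
    intro s
    refine ⟨s, ?_⟩
    intro M _ _ _ x hx _ hrad hH m hm r hr
    let K := LinearMap.ker (mulL x M)
    have h1 : Tor I K := by
      apply tor_of_rad
      have := rad_step hrad (ann_sub K) (Ideal.le_radical (by
        rw [Module.mem_annihilator]
        rintro ⟨m, hm⟩
        exact Subtype.ext hm))
      rwa [Ideal.ofList_nil, bot_sup_eq] at this
    obtain ⟨t, ht⟩ := h1 ⟨m, hm⟩
    exact H0_kill I t m (fun a ha => congrArg Subtype.val (ht a ha)) r (hH 0 le_rfl r hr)
  | cons z L ih =>
    intro s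
    obtain ⟨t, ht⟩ := ih (s + s)
    refine ⟨s + t, ?_⟩
    intro M _ _ _ x hx hL hrad hH m hm r hr
    let G := Gam I M
    have hG : ∀ r ∈ I ^ s, ∀ g ∈ G, r • g = 0 := by
      rintro r hr g ⟨k, hk⟩
      exact H0_kill I k g hk r (hH 0 (Nat.zero_le _) r hr)
    let Q := M ⧸ G
    have hGQ : Gam I Q = ⊥ := by
      rw [eq_bot_iff]
      rintro q ⟨k, hk⟩
      obtain ⟨q, rfl⟩ := G.mkQ_surjective q
      refine (Submodule.Quotient.mk_eq_zero G).2 ?_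
      refine ⟨s + k, fun a ha => ?_⟩
      rw [pow_add] at ha
      refine Submodule.mul_induction_on ha ?_ ?_
      · intro a ha b hb
        rw [mul_smul]
        apply hG a ha
        have := hk b hb
        rw [← map_smul] at this
        exact (Submodule.Quotient.mk_eq_zero G).1 this
      · intro a b ha hb
        rw [add_smul, ha, hb, add_zero]
    have hHQ : ∀ j ≤ L.length + 1, ∀ r ∈ I ^ s, ∀ z : HH I j Q, r • z = 0 := by
      intro j hj r hr z
      have h1 := les_surj (I := I) (n := j) G.injective_subtype (LinearMap.exact_subtype_mkQ G)
        G.mkQ_surjective (Tor_van I j G (Tor_Gam I M))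
      obtain ⟨z, rfl⟩ := h1 z
      rw [← map_smul, hH j hj r hr, map_zero]
    have hradQ : I ≤ (Ideal.span {z} ⊔ Ideal.ofList (x :: L) ⊔ Module.annihilator R Q).radical := by
      refine rad_aux hrad ?_
      rw [Ideal.ofList_cons, Ideal.ofList_cons, Ideal.ofList_cons]
      refine le_trans ?_ Ideal.le_radical
      refine sup_le (sup_le ?_ (sup_le ?_ ?_)) ?_
      · exact le_sup_left.trans (le_sup_right.trans le_sup_left)
      · exact le_sup_left.trans le_sup_left
      · exact le_sup_right.trans (le_sup_right.trans le_sup_left)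
      · exact (ann_quot G).trans le_sup_right
    obtain ⟨b, hb, hreg⟩ := exists_regular I z (Ideal.ofList (x :: L)) Q hGQ hradQ
    have hL' : ∀ a ∈ L, a ∈ I := fun a ha => hL a (List.mem_cons_of_mem _ ha)
    have hyI : z + b ∈ I := by
      refine I.add_mem (hL z List.mem_cons_self) ?_
      have : Ideal.ofList (x :: L) ≤ I := by
        rw [Ideal.ofList, Ideal.span_le]
        intro a ha
        rcases List.mem_cons.1 ha with rfl | ha
        · exact hx
        · exact hL' a ha
      exact this hb
    have key : ∀ (n : ℕ), ∀ r ∈ I ^ t, r • G.mkQ m ∈ LinearMap.range (mulL ((z + b) ^ n) Q) := by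
      intro n r hr
      have hregn : Function.Injective (mulL ((z + b) ^ n) Q) := by
        have h1 : mulL ((z + b) ^ n) Q = (mulL (z + b) Q) ^ n := by
          rw [smul_pow]; simp [mulL]
        rw [h1, Module.End.coe_pow]
        exact hreg.iterate n
      let W := Q ⧸ LinearMap.range (mulL ((z + b) ^ n) Q)
      have h2 := ht W x hx hL' (by
        have hy : z + b ∈ (Module.annihilator R W).radical := ⟨n, ann_range _ _⟩
        refine rad_aux hradQ ?_
        refine sup_le (sup_le ?_ ?_) ?_
        · rw [Ideal.span_singleton_le_iff_mem]
          have h3 : (z + b) - b ∈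
              (Ideal.ofList (x :: L) ⊔ Module.annihilator R W).radical :=
            Ideal.sub_mem _ (Ideal.radical_mono le_sup_right hy)
              (Ideal.le_radical (le_sup_left (α := Ideal R) hb))
          rwa [add_sub_cancel_right] at h3
        · exact le_sup_left.trans Ideal.le_radical
        · exact ((ann_quot _).trans le_sup_right).trans Ideal.le_radical) (by
        intro j hj r hr w
        rw [pow_add] at hr
        refine Submodule.mul_induction_on hr ?_ ?_
        · intro a ha c hc
          exact les_kill hregn (LinearMap.exact_map_mkQ_range _) (Submodule.mkQ_surjective _) a c
            (hHQ j (by omega) a ha) (hHQ (j+1) (by omega) c hc) w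
        · intro a c ha hc
          rw [add_smul, ha, hc, add_zero]) (Submodule.mkQ _ (G.mkQ m)) (by
        rw [← map_smul, ← map_smul, hm, map_zero, map_zero]) r hr
      rw [← map_smul] at h2
      exact (Submodule.Quotient.mk_eq_zero _).1 h2
    have key2 : ∀ r ∈ I ^ t, r • m ∈ G := by
      intro r hr
      have h1 := Ideal.iInf_pow_smul_eq_bot_of_le_jacobson (M := Q) I hjac
      have h2 : r • G.mkQ m ∈ (⨅ i : ℕ, I ^ i • ⊤ : Submodule R Q) := by
        rw [Submodule.mem_iInf]
        intro n
        obtain ⟨q, hq⟩ := key n r hr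
        rw [← hq]
        exact Submodule.smul_mem_smul (Ideal.pow_mem_pow hyI n) Submodule.mem_top
      rw [h1, Submodule.mem_bot, ← map_smul] at h2
      exact (Submodule.Quotient.mk_eq_zero G).1 h2
    rw [pow_add] at hr
    refine Submodule.mul_induction_on hr ?_ ?_
    · intro a ha c hc
      rw [mul_smul]
      exact hG a ha _ (key2 c hc)
    · intro a c ha hc
      rw [add_smul, ha, hc, add_zero]

end LC

namespace LC

/-- the inductive package -/
def PP (I : Ideal R) (L : List R) (N : Type) [AddCommGroup N] [Module R N] : Prop :=
  I ≤ (Ideal.ofList L ⊔ Module.annihilator R N).radical ∧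
  (∀ j < L.length, Module.Finite R (HH I j N)) ∧ Nontrivial (HH I L.length N)

lemma PP_equiv {I : Ideal R} {L : List R} {N N' : Type} [AddCommGroup N] [Module R N]
    [AddCommGroup N'] [Module R N'] (e : N ≃ₗ[R] N') (h : PP I L N) : PP I L N' := by
  obtain ⟨h1, h2, h3⟩ := h
  refine ⟨?_, fun j hj => ?_, ?_⟩
  · rwa [← e.annihilator_eq]
  · have := h2 j hj
    exact Module.Finite.equiv (Hequiv I j e)
  · exact (Hequiv I L.length e).symm.toEquiv.nontrivial

section
variable (y : R) (N : Type) [AddCommGroup N] [Module R N]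

lemma exact_rr : Function.Exact (LinearMap.ker (mulL y N)).subtype (mulL y N).rangeRestrict := by
  intro m
  constructor
  · intro h
    exact ⟨⟨m, congrArg Subtype.val h⟩, rfl⟩
  · rintro ⟨⟨m, hm⟩, rfl⟩
    exact Subtype.ext hm

lemma exact_rq : Function.Exact (LinearMap.range (mulL y N)).subtype
    (LinearMap.range (mulL y N)).mkQ := LinearMap.exact_subtype_mkQ _

lemma Hm_mul (I : Ideal R) (n : ℕ) (z : HH I n N) :
    Hm I n (LinearMap.range (mulL y N)).subtype (Hm I n (mulL y N).rangeRestrict z) = y • z := by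
  rw [← Hm_comp, ← Hm_smul]
  rfl

lemma rad_ker {I : Ideal R} {L : List R}
    (hrad : I ≤ (Ideal.ofList (y :: L) ⊔ Module.annihilator R N).radical) :
    I ≤ (Ideal.ofList L ⊔ Module.annihilator R (LinearMap.ker (mulL y N))).radical :=
  rad_step hrad (ann_sub _) (Ideal.le_radical (by
    rw [Module.mem_annihilator]
    rintro ⟨m, hm⟩
    exact Subtype.ext hm))

lemma rad_coker {I : Ideal R} {L : List R}
    (hrad : I ≤ (Ideal.ofList (y :: L) ⊔ Module.annihilator R N).radical) :
    I ≤ (Ideal.ofList L ⊔ Module.annihilator R (N ⧸ LinearMap.range (mulL y N))).radical :=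
  rad_step hrad (ann_quot _) (Ideal.le_radical (ann_range _ _))

end

lemma step [IsNoetherianRing R] (I : Ideal R) (hjac : I ≤ (⊥ : Ideal R).jacobson)
    (y : R) (L : List R) (hL : ∀ a ∈ y :: L, a ∈ I) (M : Type) [AddCommGroup M] [Module R M]
    [Module.Finite R M] (h : PP I (y :: L) M) : PP I L (M ⧸ LinearMap.range (mulL y M)) := by
  obtain ⟨h1, h2, h3⟩ := h
  simp only [List.length_cons] at h2 h3
  have hy : y ∈ I := hL y List.mem_cons_self
  have hL' : ∀ a ∈ L, a ∈ I := fun a ha => hL a (List.mem_cons_of_mem _ ha)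
  have hs : ∀ j, ∃ s, j < L.length + 1 → ∀ r ∈ I ^ s, ∀ z : HH I j M, r • z = 0 := by
    intro j
    by_cases hj : j < L.length + 1
    · have := h2 j hj
      obtain ⟨t, ht⟩ := Tor_fg (I := I) (N := HH I j M) (H_torsion I j)
      exact ⟨t, fun _ => ht⟩
    · exact ⟨0, fun h => absurd h hj⟩
  choose s hs using hs
  obtain ⟨t, ht⟩ := kill_torsion I hjac L ((Finset.range (L.length + 1)).sup s)
  have hK : Tor I (LinearMap.ker (mulL y M)) := by
    rintro ⟨m, hm⟩
    refine ⟨t, fun a ha => Subtype.ext ?_⟩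
    refine ht M y hy hL' h1 ?_ m hm a ha
    intro j hj r hr z
    have hj' : j < L.length + 1 := by omega
    exact hs j hj' r (Ideal.pow_le_pow_right (Finset.le_sup (Finset.mem_range.2 hj')) hr) z
  have hsurj : ∀ j, Function.Surjective (Hm I j (mulL y M).rangeRestrict) := fun j =>
    les_surj (Submodule.injective_subtype _) (exact_rr y M) (LinearMap.surjective_rangeRestrict _)
      (Tor_van I j _ hK)
  have hinj : ∀ j, Function.Injective (Hm I (j+1) (mulL y M).rangeRestrict) := by
    intro j
    rw [injective_iff_map_eq_zero]
    intro b hb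
    obtain ⟨a, rfl⟩ := exact_mid (Submodule.injective_subtype _) (exact_rr y M)
      (LinearMap.surjective_rangeRestrict _) b hb
    have := Tor_van I j _ hK
    rw [Subsingleton.elim a 0, map_zero]
  refine ⟨rad_coker y M h1, ?_, ?_⟩
  · intro j hj
    have := h2 (j+1) (by omega)
    exact les_fin (Submodule.injective_subtype _) (exact_rq y M) (Submodule.mkQ_surjective _)
      (h2 j (by omega)) (Module.Finite.of_surjective _ (hsurj (j+1)))
  · by_contra hn
    rw [not_nontrivial_iff_subsingleton] at hn
    have h4 := les_inj (I := I) (Submodule.injective_subtype _) (exact_rq y M)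
      (Submodule.mkQ_surjective _) hn
    have h5 : Subsingleton (HH I (L.length + 1) M) := by
      apply zero_of_inj hy
      intro a b hab
      apply hinj
      apply h4
      rw [Hm_mul, Hm_mul, ← Hm_smul, ← Hm_smul]
      exact hab
    exact not_subsingleton _ h5

lemma nonfin [IsNoetherianRing R] (I : Ideal R) (hjac : I ≤ (⊥ : Ideal R).jacobson)
    (y : R) (L : List R) (hL : ∀ a ∈ y :: L, a ∈ I) (N : Type) [AddCommGroup N] [Module R N]
    [Module.Finite R N]
    (hrad : I ≤ (Ideal.ofList (y :: L) ⊔ Module.annihilator R N).radical)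
    (hn : Nontrivial (HH I (L.length + 1) N)) : ¬ Module.Finite R (HH I (L.length + 1) N) := by
  intro hf
  have hy : y ∈ I := hL y List.mem_cons_self
  have hL' : ∀ a ∈ L, a ∈ I := fun a ha => hL a (List.mem_cons_of_mem _ ha)
  have h1 : Function.Surjective (Hm I (L.length + 1) (mulL y N).rangeRestrict) :=
    les_surj (Submodule.injective_subtype _) (exact_rr y N) (LinearMap.surjective_rangeRestrict _)
      (van I L _ hL' (rad_ker y N hrad) _ (by omega))
  have h2 := les_surj_u (I := I) (n := L.length + 1) (Submodule.injective_subtype _)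
    (exact_rq y N) (Submodule.mkQ_surjective _)
    (van I L _ hL' (rad_coker y N hrad) _ (by omega))
  have h3 : (⊤ : Submodule R (HH I (L.length + 1) N)) = ⊥ := by
    refine Submodule.eq_bot_of_le_smul_of_le_jacobson_bot I ⊤ hf.fg_top ?_ hjac
    intro z _
    obtain ⟨z, rfl⟩ := h2 z
    obtain ⟨z, rfl⟩ := h1 z
    rw [Hm_mul]
    exact Submodule.smul_mem_smul hy Submodule.mem_top
  have : Subsingleton (HH I (L.length + 1) N) := by
    refine subsingleton_of_forall_eq 0 fun z => ?_
    have : z ∈ (⊤ : Submodule R (HH I (L.length + 1) N)) := Submodule.mem_top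
    rwa [h3, Submodule.mem_bot] at this
  exact not_subsingleton _ this

open scoped Pointwise in
lemma range_mulL (y : R) (M : Type) [AddCommGroup M] [Module R M] :
    LinearMap.range (mulL y M) = y • (⊤ : Submodule R M) := by
  ext m
  simp [Submodule.mem_smul_pointwise_iff_exists]

lemma iter [IsNoetherianRing R] (I : Ideal R) (hjac : I ≤ (⊥ : Ideal R).jacobson) (i : ℕ) :
    ∀ (L : List R), (∀ a ∈ L, a ∈ I) → i ≤ L.length → ∀ (M : Type) [AddCommGroup M] [Module R M]
    [Module.Finite R M], PP I L M →
    PP I (L.drop i) (M ⧸ (Ideal.ofList (L.take i) • (⊤ : Submodule R M))) := by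
  induction i with
  | zero =>
    intro L _ _ M _ _ _ h
    refine PP_equiv (Submodule.quotEquivOfEqBot _ ?_).symm h
    rw [List.take_zero, Ideal.ofList_nil, Submodule.bot_smul]
  | succ i ih =>
    intro L hL hi M _ _ _ h
    cases L with
    | nil => simp at hi
    | cons y L =>
      have h1 : PP I L (QuotSMulTop y M) :=
        PP_equiv (Submodule.quotEquivOfEq _ _ (range_mulL y M)) (step I hjac y L hL M h)
      have h2 := ih L (fun a ha => hL a (List.mem_cons_of_mem _ ha))
        (by simpa using hi) (QuotSMulTop y M) h1
      exact PP_equiv (Submodule.quotOfListConsSMulTopEquivQuotSMulTopInner M y (L.take i)).symm h2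

lemma ofList_take {c : ℕ} (x : Fin c → R) (i : ℕ) :
    Ideal.ofList ((List.ofFn x).take i) = Ideal.span (x '' {j : Fin c | (j : ℕ) < i}) := by
  rw [Ideal.ofList]
  congr 1
  ext a
  simp only [Set.mem_ofPred_eq, Set.mem_image, List.mem_take_iff_getElem]
  constructor
  · rintro ⟨j, hj, rfl⟩
    simp only [List.length_ofFn, lt_min_iff] at hj
    exact ⟨⟨j, hj.2⟩, hj.1, by simp⟩
  · rintro ⟨j, hj, rfl⟩
    exact ⟨j, by simp [hj], by simp⟩

end LC

/-- **Theorem 3.3(ii).** Suppose `I` is contained in the Jacobson radical of `R` and `M` is an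
`I`-relative generalized Cohen-Macaulay module with `c := cd(I,M) = ara(I,M)`. If
`x₁, …, x_c` is an `I`-relative system of parameters of `M`, then for every `i = 0, …, c`
the quotient `M/⟨x₁,…,x_i⟩M` is an `I`-relative generalized Cohen-Macaulay module and
`cd(I, M/⟨x₁,…,x_i⟩M) = c - i`. -/
theorem theorem_3_3_ii [IsNoetherianRing R] (I : Ideal R) (hjac : I ≤ (⊥ : Ideal R).jacobson)
    (M : Type) [AddCommGroup M] [Module R M] [Module.Finite R M]
    (hgcm : IsRelGCM I M) (c : ℕ) (hc : IsCd I M c) (ha : IsAra I M c)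
    (x : Fin c → R) (hx : IsRsop I M x) :
    ∀ i : ℕ, i ≤ c →
      IsRelGCM I (M ⧸ (Ideal.span (x '' {j : Fin c | (j : ℕ) < i}) • (⊤ : Submodule R M))) ∧
      IsCd I (M ⧸ (Ideal.span (x '' {j : Fin c | (j : ℕ) < i}) • (⊤ : Submodule R M)))
        (c - i) := by
  obtain ⟨hxI, hxr⟩ := hx
  have hlen : (List.ofFn x).length = c := List.length_ofFn
  have hL : ∀ a ∈ List.ofFn x, a ∈ I := by
    intro a ha
    obtain ⟨j, rfl⟩ := List.mem_ofFn.1 ha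
    exact hxI j
  have hspan : Ideal.ofList (List.ofFn x) = Ideal.span (Set.range x) := by
    rw [Ideal.ofList]
    congr 1
    ext a
    simp
  have hPP : LC.PP I (List.ofFn x) M := by
    refine ⟨?_, ?_, ?_⟩
    · rw [hspan, ← Submodule.add_eq_sup, hxr, Submodule.add_eq_sup]
      exact le_sup_left.trans Ideal.le_radical
    · rw [hlen]
      intro j hj
      rcases hgcm with h | ⟨d, hd, hf⟩
      · have h1 := h c (by omega)
        have h2 := hc.1
        exact absurd h1 (not_subsingleton _)
      · have hdc : d = c := by
          rcases lt_trichotomy d c with h | h | h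
          · have h1 := hd.2 c h
            have h2 := hc.1
            exact absurd h1 (not_subsingleton _)
          · exact h
          · have h1 := hc.2 d h
            have h2 := hd.1
            exact absurd h1 (not_subsingleton _)
        subst hdc
        exact hf.1 j hj
    · rw [hlen]
      exact hc.1
  intro i hi
  have hP := LC.iter I hjac i (List.ofFn x) hL (by omega) M hPP
  rw [LC.ofList_take] at hP
  have hLd : ∀ a ∈ (List.ofFn x).drop i, a ∈ I := fun a ha => hL a (List.mem_of_mem_drop ha)
  have hlend : ((List.ofFn x).drop i).length = c - i := by rw [List.length_drop, hlen]
  have hvan := LC.van I _ _ hLd hP.1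
  have hcd : IsCd I (M ⧸ (Ideal.span (x '' {j : Fin c | (j : ℕ) < i}) • (⊤ : Submodule R M)))
        (c - i) := by
    refine ⟨?_, ?_⟩
    · rw [← hlend]
      exact hP.2.2
    · rw [← hlend]
      exact hvan
  refine ⟨?_, hcd⟩
  generalize (List.ofFn x).drop i = L at hP hLd hlend hvan
  cases L with
  | nil => exact Or.inl hvan
  | cons y L =>
    refine Or.inr ⟨c - i, hcd, ?_⟩
    rw [← hlend]
    exact ⟨hP.2.1, LC.nonfin I hjac y L hLd _ hP.1 hP.2.2⟩
end
end
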